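/- arXiv:1906.12246 — 4 statements merged into one kernel-verified Lean document; each statement's English description precedes it below -/
import Mathlib

section
/- Let f: P → Q and g: P' → Q' be injective morphisms in P, and set X = coker(f), Y = coker(g) in R. Then there are isomorphisms (i) Hom_{Ho(R)}(C_f, C_g) ≅ Hom_R(X, Y) and (ii) Hom_{Ho(R)}(C_f, C_g^†) ≅ Ext¹_R(X, Y). -/
set_option linter.unusedSectionVars false

open CategoryTheory CategoryTheory.Limits Opposite

noncomputable section

universe u

variable (k : Type) [Field k] [Fintype k]
variable (R : Type u) [SmallCategory R] [Abelian R] [Linear k R] [EnoughProjectives R]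

/-- The objects `A` of `R` such that `Hom(M, A)` is a finite set for every `M`. -/
def IsFinHom (A : R) : Prop := ∀ M : R, Finite (M ⟶ A)

/-- The Euler form `⟨M,A⟩ = dim Hom(M,A) - dim Ext¹(M,A)`. -/
def euler (M A : R) : ℤ :=
  (Module.finrank k (M ⟶ A) : ℤ) -
    (Module.finrank k (((_root_.Ext k R 1).obj (op M)).obj A) : ℤ)

/-- The set of relations defining the Grothendieck group of `R`. -/
def sesSet : Set (FreeAbelianGroup R) :=
  {x | ∃ S : ShortComplex R, S.ShortExact ∧
    x = FreeAbelianGroup.of S.X₂ - FreeAbelianGroup.of S.X₁ - FreeAbelianGroup.of S.X₃}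

/-- The Grothendieck group `K(R)`. -/
abbrev K0 := FreeAbelianGroup R ⧸ AddSubgroup.closure (sesSet R)

/-- The class of an object in `K(R)`. -/
def K0.cls (X : R) : K0 R := QuotientAddGroup.mk (FreeAbelianGroup.of X)

/-- The set of relations defining the Grothendieck group of the subcategory `A`. -/
def sesSetA : Set (FreeAbelianGroup {A : R // IsFinHom R A}) :=
  {x | ∃ (S : ShortComplex R) (h1 : IsFinHom R S.X₁) (h2 : IsFinHom R S.X₂)
      (h3 : IsFinHom R S.X₃), S.ShortExact ∧
    x = FreeAbelianGroup.of ⟨S.X₂, h2⟩ - FreeAbelianGroup.of ⟨S.X₁, h1⟩ -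
      FreeAbelianGroup.of ⟨S.X₃, h3⟩}

/-- The Grothendieck group `K(A)`. -/
abbrev KA := FreeAbelianGroup {A : R // IsFinHom R A} ⧸ AddSubgroup.closure (sesSetA R)

/-- The class of an object of `A` in `K(A)`. -/
def KA.cls (A : {A : R // IsFinHom R A}) : KA R := QuotientAddGroup.mk (FreeAbelianGroup.of A)

/-- `R` is hereditary, i.e. of global dimension at most 1. -/
def Hereditary : Prop :=
  ∀ X Y : R, Subsingleton (((_root_.Ext k R 2).obj (op X)).obj Y)

/-- Condition (c): cancellation for projectives. -/
def CondC : Prop :=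
  ∀ P Q M : R, Projective P → Projective Q → Projective M →
    Nonempty ((M ⊞ P) ≅ (M ⊞ Q)) → Nonempty (P ≅ Q)

/-- Condition (d): every element of `K(R)` is a `ℚ`-linear combination of classes of
objects of `A`. -/
def CondD : Prop :=
  ∀ x : K0 R, ∃ n : ℕ, n ≠ 0 ∧ (n : ℤ) • x ∈
    AddSubgroup.closure (Set.range fun A : {A : R // IsFinHom R A} => K0.cls R A.1)

/-- Condition (e). -/
def CondE : Prop :=
  ∀ A B : R, IsFinHom R A → IsFinHom R B → K0.cls R A = K0.cls R B →
    ∀ P : R, Projective P → Nat.card (P ⟶ A) = Nat.card (P ⟶ B)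

structure Z2Cx where
  X0 : R
  X1 : R
  d0 : X0 ⟶ X1
  d1 : X1 ⟶ X0
  d01 : d0 ≫ d1 = 0
  d10 : d1 ≫ d0 = 0

namespace Z2Cx

variable {R}

/-- Morphisms of `ℤ/2`-graded complexes. -/
@[ext] structure Hom (M N : Z2Cx R) where
  f0 : M.X0 ⟶ N.X0
  f1 : M.X1 ⟶ N.X1
  comm0 : M.d0 ≫ f1 = f0 ≫ N.d0
  comm1 : M.d1 ≫ f0 = f1 ≫ N.d1

instance : CategoryStruct (Z2Cx R) where
  Hom := Hom
  id M := ⟨𝟙 _, 𝟙 _, by simp, by simp⟩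
  comp {M N P} f g := ⟨f.f0 ≫ g.f0, f.f1 ≫ g.f1, by
      rw [← Category.assoc, f.comm0, Category.assoc, g.comm0, Category.assoc], by
      rw [← Category.assoc, f.comm1, Category.assoc, g.comm1, Category.assoc]⟩

@[simp] lemma id_f0 (M : Z2Cx R) : (𝟙 M : Hom M M).f0 = 𝟙 M.X0 := rfl
@[simp] lemma id_f1 (M : Z2Cx R) : (𝟙 M : Hom M M).f1 = 𝟙 M.X1 := rfl
@[simp] lemma comp_f0 {M N P : Z2Cx R} (f : M ⟶ N) (g : N ⟶ P) :
    (f ≫ g).f0 = Hom.f0 f ≫ Hom.f0 g := rfl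
@[simp] lemma comp_f1 {M N P : Z2Cx R} (f : M ⟶ N) (g : N ⟶ P) :
    (f ≫ g).f1 = Hom.f1 f ≫ Hom.f1 g := rfl

instance : Category (Z2Cx R) where
  id_comp f := by apply Hom.ext <;> simp
  comp_id f := by apply Hom.ext <;> simp
  assoc f g h := by apply Hom.ext <;> simp

variable (R)

/-- The two-term complex `C_f` associated to a morphism `f`, concentrated so that
`X1 = P`, `X0 = Q`, `d1 = f`, `d0 = 0`. -/
def Cf {P Q : R} (f : P ⟶ Q) : Z2Cx R := ⟨Q, P, 0, f, by simp, by simp⟩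

/-- The shift involution `†`: it interchanges the gradings and negates the differentials. -/
def dagger (M : Z2Cx R) : Z2Cx R :=
  ⟨M.X1, M.X0, -M.d1, -M.d0, by simp [M.d10], by simp [M.d01]⟩

/-- The acyclic complex `K_P` with `d1 = 𝟙 P` and `d0 = 0`. -/
def KP (P : R) : Z2Cx R := ⟨P, P, 0, 𝟙 P, by simp, by simp⟩

/-- Direct sum of `ℤ/2`-graded complexes. -/
def dsum (M N : Z2Cx R) : Z2Cx R where
  X0 := M.X0 ⊞ N.X0
  X1 := M.X1 ⊞ N.X1
  d0 := biprod.map M.d0 N.d0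
  d1 := biprod.map M.d1 N.d1
  d01 := by ext <;> simp [M.d01, N.d01]
  d10 := by ext <;> simp [M.d10, N.d10]

/-- Degree `0` homology of a `ℤ/2`-graded complex. -/
def H0 (M : Z2Cx R) : R := (ShortComplex.mk M.d1 M.d0 M.d10).homology

/-- Degree `1` homology of a `ℤ/2`-graded complex. -/
def H1 (M : Z2Cx R) : R := (ShortComplex.mk M.d0 M.d1 M.d01).homology

/-- The homology complex `H•(M•)`, with zero differentials. -/
def Hcx (M : Z2Cx R) : Z2Cx R := ⟨H0 R M, H1 R M, 0, 0, by simp, by simp⟩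

/-- A complex is acyclic if its homology vanishes. -/
def Acyclic (M : Z2Cx R) : Prop := IsZero (H0 R M) ∧ IsZero (H1 R M)

end Z2Cx

namespace Z2Cx

variable {R}

/-- Two morphisms of `ℤ/2`-graded complexes are homotopic. -/
def Homotopic (M N : Z2Cx R) (s t : M ⟶ N) : Prop :=
  ∃ (h0 : M.X0 ⟶ N.X1) (h1 : M.X1 ⟶ N.X0),
    Hom.f0 t = Hom.f0 s + h0 ≫ N.d1 + M.d0 ≫ h1 ∧
    Hom.f1 t = Hom.f1 s + h1 ≫ N.d0 + M.d1 ≫ h0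

/-- Hom-sets in the homotopy category `Ho(R)` of `ℤ/2`-graded complexes. -/
def HoHom (M N : Z2Cx R) := Quot (Homotopic M N)

end Z2Cx

open Z2Cx

section Helpers

open scoped ZeroObject

variable {R}

/-- The objects of the two-term resolution. -/
def resX (P Q : R) : ℕ → R
  | 0 => Q
  | 1 => P
  | _ + 2 => 0

/-- The differentials of the two-term resolution. -/
def resD {P Q : R} (f : P ⟶ Q) : ∀ n, resX P Q (n + 1) ⟶ resX P Q n
  | 0 => f
  | _ + 1 => 0

lemma resD_sq {P Q : R} (f : P ⟶ Q) (n : ℕ) : resD f (n + 1) ≫ resD f n = 0 := zero_comp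

/-- The two-term complex. -/
def resCx {P Q : R} (f : P ⟶ Q) : ChainComplex R ℕ :=
  ChainComplex.of (resX P Q) (resD f) (resD_sq f)

lemma resCx_d {P Q : R} (f : P ⟶ Q) (n : ℕ) : (resCx f).d (n + 1) n = resD f n :=
  ChainComplex.of_d _ _ _

lemma resCx_exact {P Q : R} (f : P ⟶ Q) [Mono f] (n : ℕ) : (resCx f).ExactAt (n + 1) := by
  rw [HomologicalComplex.exactAt_iff' _ (n + 1 + 1) (n + 1) n (by simp) (by simp)]
  match n with
  | 0 =>
    have h : Mono ((resCx f).sc' (0 + 1 + 1) (0 + 1) 0).g := by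
      change Mono ((resCx f).d (0 + 1) 0)
      rw [resCx_d]
      assumption
    refine (ShortComplex.exact_iff_mono _ ?_).2 h
    change (resCx f).d (1 + 1) 1 = 0
    rw [resCx_d]
    rfl
  | n + 1 =>
    exact ShortComplex.exact_of_isZero_X₂ _ (isZero_zero R)

/-- The resolution of the cokernel. -/
def res {P Q : R} (hP : Projective P) (hQ : Projective Q) (f : P ⟶ Q) [Mono f] :
    ProjectiveResolution (cokernel f) where
  complex := resCx f
  projective n := match n with
    | 0 => hQ
    | 1 => hP
    | _ + 2 => (isZero_zero R).projective
  π := (ChainComplex.toSingle₀Equiv _ _).symm ⟨cokernel.π f, by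
    rw [resCx_d]; exact cokernel.condition f⟩
  quasiIso := ⟨fun n => by
    cases n with
    | zero =>
      rw [ChainComplex.quasiIsoAt₀_iff, ShortComplex.quasiIso_iff_of_zeros']
      · refine (ShortComplex.exact_and_epi_g_iff_of_iso
          (S₂ := ShortComplex.mk f (cokernel.π f) (cokernel.condition f)) ?_).2
          ⟨ShortComplex.exact_cokernel f, by dsimp; infer_instance⟩
        refine ShortComplex.isoMk (Iso.refl P) (Iso.refl Q) (Iso.refl (cokernel f)) ?_ ?_
        · exact (Category.id_comp f).trans ((resCx_d f 0).symm.trans (Category.comp_id _).symm)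
        · refine (Category.id_comp (cokernel.π f)).trans
            (Eq.trans ?_ (Category.comp_id _).symm)
          exact (ChainComplex.toSingle₀Equiv_symm_apply_f_zero (C := resCx f) _ _).symm
      all_goals rfl
    | succ n =>
      rw [quasiIsoAt_iff_exactAt']
      · apply resCx_exact
      · apply ChainComplex.exactAt_succ_single_obj⟩

lemma ext_data {P Q : R} (hP : Projective P) (hQ : Projective Q) (f : P ⟶ Q) [Mono f] (Y : R) :
    ∃ φ : (P ⟶ Y) → (((_root_.Ext k R 1).obj (op (cokernel f))).obj Y),
      Function.Surjective φ ∧ ∀ a b, φ a = φ b ↔ ∃ h : Q ⟶ Y, a - b = f ≫ h := by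
  let K := (resCx f).linearYonedaObj k Y
  let S := K.sc' 0 1 2
  have hg : S.g = 0 := by
    apply IsZero.eq_of_tgt
    rw [IsZero.iff_id_eq_zero]
    ext (x : (0 : R) ⟶ Y)
    exact (isZero_zero R).eq_of_src _ _
  let e1 := (res hP hQ f).isoExt (R := k) 1 Y
  let e2 : K.homology 1 ≅ S.homology := K.homologyIsoSc' 0 1 2 (by simp) (by simp)
  let e : S.opcycles ≅ _ := (S.asIsoHomologyι hg).symm ≪≫ e2.symm ≪≫ e1.symm
  refine ⟨fun a => e.hom (S.pOpcycles (show S.X₂ from a)), ?_, ?_⟩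
  · have h1 : Function.Surjective S.pOpcycles :=
      (ModuleCat.epi_iff_surjective _).1 inferInstance
    have h2 : Function.Surjective e.hom := (ModuleCat.epi_iff_surjective _).1 inferInstance
    exact h2.comp h1
  · intro a b
    have h2 : Function.Injective e.hom := (ModuleCat.mono_iff_injective _).1 inferInstance
    rw [h2.eq_iff, ShortComplex.moduleCat_pOpcycles_eq_iff]
    have hd : ∀ h : Q ⟶ Y, S.f (show S.X₁ from h) = (show S.X₂ from f ≫ h) := by
      intro h
      change (resCx f).d (0 + 1) 0 ≫ h = f ≫ h
      rw [resCx_d]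
      rfl
    constructor
    · rintro ⟨h, hh⟩
      exact ⟨h, hh.symm.trans (hd h)⟩
    · rintro ⟨h, hh⟩
      exact ⟨h, (hd h).trans hh.symm⟩

lemma quot_equiv {α β : Type*} {r : α → α → Prop} (φ : α → β)
    (hs : Function.Surjective φ) (h1 : ∀ a b, r a b → φ a = φ b) (h2 : ∀ a b, φ a = φ b → r a b) :
    Nonempty (Quot r ≃ β) := by
  refine ⟨Equiv.ofBijective (Quot.lift φ h1) ⟨?_, ?_⟩⟩
  · rintro ⟨a⟩ ⟨b⟩ h
    exact Quot.sound (h2 a b h)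
  · intro b
    obtain ⟨a, rfl⟩ := hs b
    exact ⟨Quot.mk _ a, rfl⟩

end Helpers

theorem stmt8 (hH : Hereditary k R) (hc : CondC R) (hd : CondD R) (he : CondE R)
    {P Q P' Q' : R} (hP : Projective P) (hQ : Projective Q) (hP' : Projective P')
    (hQ' : Projective Q') (f : P ⟶ Q) (g : P' ⟶ Q') (hf : Mono f) (hg : Mono g) :
    Nonempty (HoHom (Cf R f) (Cf R g) ≃ (cokernel f ⟶ cokernel g)) ∧
    Nonempty (HoHom (Cf R f) (dagger R (Cf R g)) ≃
      (((_root_.Ext k R 1).obj (op (cokernel f))).obj (cokernel g))) := by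
  have factor : ∀ {T : R} (_ : Projective T) (a : T ⟶ Q') (_ : a ≫ cokernel.π g = 0),
      ∃ b : T ⟶ P', b ≫ g = a := by
    intro T _ a ha
    have hE : (ShortComplex.mk g (cokernel.π g) (cokernel.condition g)).Exact :=
      ShortComplex.exact_cokernel g
    have : Mono (ShortComplex.mk g (cokernel.π g) (cokernel.condition g)).f := hg
    exact ⟨hE.lift a ha, hE.lift_f a ha⟩
  constructor
  · have key : ∀ s : Cf R f ⟶ Cf R g,
        f ≫ (show Q ⟶ Q' from Hom.f0 s) ≫ cokernel.π g = 0 := by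
      intro s
      have h : f ≫ (show Q ⟶ Q' from Hom.f0 s) = (show P ⟶ P' from Hom.f1 s) ≫ g := s.comm1
      rw [← Category.assoc, h, Category.assoc, cokernel.condition, comp_zero]
    refine quot_equiv (fun s => cokernel.desc f _ (key s)) ?_ ?_ ?_
    · intro t
      let a : Q ⟶ Q' := Projective.factorThru (cokernel.π f ≫ t) (cokernel.π g)
      have ha : a ≫ cokernel.π g = cokernel.π f ≫ t := Projective.factorThru_comp _ _
      obtain ⟨b, hb⟩ := factor hP (f ≫ a) (by
        rw [Category.assoc, ha, ← Category.assoc, cokernel.condition, zero_comp])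
      refine ⟨⟨a, b, ?_, hb.symm⟩, ?_⟩
      · exact zero_comp.trans comp_zero.symm
      · rw [← cancel_epi (cokernel.π f), cokernel.π_desc]
        exact ha
    · rintro s t ⟨h0, h1, e0, -⟩
      change Q ⟶ P' at h0
      have e0' : (show Q ⟶ Q' from Hom.f0 t) = (show Q ⟶ Q' from Hom.f0 s) + h0 ≫ g := by
        refine e0.trans ?_
        have : (Cf R f).d0 ≫ h1 = 0 := zero_comp
        rw [this, add_zero]
        rfl
      rw [← cancel_epi (cokernel.π f), cokernel.π_desc, cokernel.π_desc, e0',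
        Preadditive.add_comp, Category.assoc, cokernel.condition, comp_zero, add_zero]
    · intro s t h
      have h' : (show Q ⟶ Q' from Hom.f0 s) ≫ cokernel.π g =
          (show Q ⟶ Q' from Hom.f0 t) ≫ cokernel.π g := by
        have := congrArg (fun z => cokernel.π f ≫ z) h
        simpa only [cokernel.π_desc] using this
      obtain ⟨b, hb⟩ := factor hQ
        ((show Q ⟶ Q' from Hom.f0 t) - (show Q ⟶ Q' from Hom.f0 s))
        (by rw [Preadditive.sub_comp, h', sub_self])
      have hs : f ≫ (show Q ⟶ Q' from Hom.f0 s) = (show P ⟶ P' from Hom.f1 s) ≫ g := s.comm1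
      have ht : f ≫ (show Q ⟶ Q' from Hom.f0 t) = (show P ⟶ P' from Hom.f1 t) ≫ g := t.comm1
      have h0 : (show Q ⟶ Q' from Hom.f0 t) =
          (show Q ⟶ Q' from Hom.f0 s) + b ≫ g + (0 : Q ⟶ P) ≫ (0 : P ⟶ Q') := by
        have A : ∀ x y : Q ⟶ Q', b ≫ g = x - y →
            x = y + b ≫ g + (0 : Q ⟶ P) ≫ (0 : P ⟶ Q') := by
          intro x y e
          rw [e]; simp
        exact A _ _ hb
      have h1 : (show P ⟶ P' from Hom.f1 t) =
          (show P ⟶ P' from Hom.f1 s) + (0 : P ⟶ Q') ≫ (0 : Q' ⟶ P') + f ≫ b := by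
        have A : ∀ (x y : Q ⟶ Q') (x' y' : P ⟶ P'), b ≫ g = x - y → f ≫ y = y' ≫ g →
            f ≫ x = x' ≫ g →
            x' = y' + (0 : P ⟶ Q') ≫ (0 : Q' ⟶ P') + f ≫ b := by
          intro x y x' y' e e1 e2
          rw [← cancel_mono g]
          simp [e, ← e1, ← e2]
        exact A _ _ _ _ hb hs ht
      exact ⟨b, (0 : P ⟶ Q'), h0, h1⟩
  · obtain ⟨φ, hφs, hφ⟩ := ext_data k hP hQ f (cokernel g)
    refine quot_equiv (fun s : Cf R f ⟶ dagger R (Cf R g) =>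
      φ ((show P ⟶ Q' from Hom.f1 s) ≫ cokernel.π g)) ?_ ?_ ?_
    · intro t
      obtain ⟨a, rfl⟩ := hφs t
      let b : P ⟶ Q' := Projective.factorThru a (cokernel.π g)
      have hb : b ≫ cokernel.π g = a := Projective.factorThru_comp _ _
      refine ⟨⟨(0 : Q ⟶ P'), b, ?_, ?_⟩, congrArg φ hb⟩
      · exact zero_comp.trans zero_comp.symm
      · have : f ≫ (0 : Q ⟶ P') = b ≫ (-(0 : Q' ⟶ P')) := by simp
        exact this
    · rintro s t ⟨h0, h1, -, e1⟩
      change Q ⟶ Q' at h0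
      change P ⟶ P' at h1
      have e1' : (show P ⟶ Q' from Hom.f1 t) =
        (show P ⟶ Q' from Hom.f1 s) + h1 ≫ (-g) + f ≫ h0 := e1
      rw [hφ]
      refine ⟨-(h0 ≫ cokernel.π g), ?_⟩
      have A : ∀ x y : P ⟶ Q', y = x + h1 ≫ (-g) + f ≫ h0 →
          x ≫ cokernel.π g - y ≫ cokernel.π g = f ≫ (-(h0 ≫ cokernel.π g)) := by
        rintro x y rfl
        simp
      exact A _ _ e1'
    · intro s t h
      obtain ⟨h, hh⟩ := (hφ _ _).1 h
      let b : Q ⟶ Q' := Projective.factorThru h (cokernel.π g)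
      have hb : b ≫ cokernel.π g = h := Projective.factorThru_comp _ _
      obtain ⟨c, hc⟩ := factor hP
        ((show P ⟶ Q' from Hom.f1 s) - (show P ⟶ Q' from Hom.f1 t) - f ≫ b)
        (by rw [Preadditive.sub_comp, Preadditive.sub_comp, hh, Category.assoc, hb, sub_self])
      have z : ∀ u : Cf R f ⟶ dagger R (Cf R g), (show Q ⟶ P' from Hom.f0 u) = 0 := by
        intro u
        have h : (0 : Q ⟶ P) ≫ (show P ⟶ Q' from Hom.f1 u) =
          (show Q ⟶ P' from Hom.f0 u) ≫ (-g) := u.comm0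
        have A : ∀ (x : Q ⟶ P') (y : P ⟶ Q'), (0 : Q ⟶ P) ≫ y = x ≫ (-g) → x = 0 := by
          intro x y e
          rw [← cancel_mono g]
          simpa using e.symm
        exact A _ _ h
      have h0 : (show Q ⟶ P' from Hom.f0 t) =
          (show Q ⟶ P' from Hom.f0 s) + (-b) ≫ (-(0 : Q' ⟶ P')) + (0 : Q ⟶ P) ≫ c := by
        rw [z, z]; simp
      have h1 : (show P ⟶ Q' from Hom.f1 t) =
          (show P ⟶ Q' from Hom.f1 s) + c ≫ (-g) + f ≫ (-b) := by
        rw [Preadditive.comp_neg, Preadditive.comp_neg, hc]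
        abel
      exact ⟨-b, c, h0, h1⟩

end
end

section
/- For all complexes M•, N• ∈ C_fin(P), the set Ext¹_{C(R)}(M•, N•) is finite. -/
set_option linter.unusedSectionVars false

open CategoryTheory CategoryTheory.Limits Opposite

noncomputable section

universe u

variable (k : Type) [Field k] [Fintype k]
variable (R : Type u) [SmallCategory R] [Abelian R] [Linear k R] [EnoughProjectives R]

namespace Z2Cx

variable {R}

/-- A short exact sequence of `ℤ/2`-graded complexes, exhibiting an extension of `M` by `N`
(short exactness of a sequence of complexes is componentwise short exactness). -/
structure ExtSES (M N : Z2Cx R) where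
  E : Z2Cx R
  i : N ⟶ E
  p : E ⟶ M
  w0 : Hom.f0 i ≫ Hom.f0 p = 0
  w1 : Hom.f1 i ≫ Hom.f1 p = 0
  ex0 : (ShortComplex.mk (Hom.f0 i) (Hom.f0 p) w0).ShortExact
  ex1 : (ShortComplex.mk (Hom.f1 i) (Hom.f1 p) w1).ShortExact

/-- Equivalence of extensions of complexes. -/
def ExtEquiv (M N : Z2Cx R) (s t : ExtSES M N) : Prop :=
  ∃ φ : s.E ≅ t.E, s.i ≫ φ.hom = t.i ∧ φ.hom ≫ t.p = s.p

/-- The set `Ext¹_{C(R)}(M•, N•)` of equivalence classes of extensions of `M•` by `N•`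
in the category of `ℤ/2`-graded complexes over `R`. -/
def ExtCl (M N : Z2Cx R) := Quot (ExtEquiv M N)

end Z2Cx

/-- Complexes of projectives with homology in the subcategory `A`, i.e. objects
of `C_fin(P)`. -/
def FinCx (M : Z2Cx R) : Prop :=
  Projective M.X0 ∧ Projective M.X1 ∧ IsFinHom R (Z2Cx.H0 R M) ∧ IsFinHom R (Z2Cx.H1 R M)

open Z2Cx

section Helpers

/-- In a hereditary category, every object has projective dimension at most one. -/
lemma hered_pd (hH : Hereditary k R) (X : R) : HasProjectiveDimensionLT X 2 := by
  let P := ProjectiveResolution.of X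
  let ι : kernel (P.complex.d 1 0) ⟶ P.complex.X 1 := kernel.ι _
  let e : P.complex.X 2 ⟶ kernel (P.complex.d 1 0) :=
    kernel.lift _ (P.complex.d 2 1) (by simp)
  have he : Epi e := by
    have := P.exact_succ 0
    rw [ShortComplex.exact_iff_epi_kernel_lift] at this
    exact this
  have hei : e ≫ ι = P.complex.d 2 1 := kernel.lift_ι _ _ _
  have hcoc : P.complex.d 3 2 ≫ e = 0 := by
    rw [← cancel_mono ι, Category.assoc, hei]; simp
  -- the cocycle `e` is a coboundary
  obtain ⟨s, hs⟩ : ∃ s : P.complex.X 1 ⟶ kernel (P.complex.d 1 0),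
      P.complex.d 2 1 ≫ s = e := by
    have h0 : IsZero ((P.complex.linearYonedaObj k (kernel (P.complex.d 1 0))).homology 2) := by
      refine IsZero.of_iso ?_ (P.isoExt 2 _).symm
      have := hH X (kernel (P.complex.d 1 0))
      exact ModuleCat.isZero_of_subsingleton _
    rw [← HomologicalComplex.exactAt_iff_isZero_homology,
      HomologicalComplex.exactAt_iff' _ 1 2 3 (by simp) (by simp),
      ShortComplex.moduleCat_exact_iff] at h0
    obtain ⟨s, hs⟩ := h0 e hcoc
    exact ⟨s, hs⟩
  have hιs : ι ≫ s = 𝟙 _ := by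
    rw [← cancel_epi e, ← Category.assoc, hei, hs, Category.comp_id]
  let S := ShortComplex.mk _ _ P.complex_d_comp_π_f_zero
  have hS : S.Exact := P.exact₀
  have := hS.epi_toCycles
  have hw : ι ≫ S.toCycles = 0 := by
    rw [← cancel_mono S.iCycles, Category.assoc, S.toCycles_i]
    exact (kernel.condition _).trans zero_comp.symm
  have hex : (ShortComplex.mk ι S.toCycles hw).Exact := by
    apply ShortComplex.exact_of_f_is_kernel
    exact isKernelOfComp S.iCycles S.f (kernelIsKernel S.f) hw S.toCycles_i
  have sp := ShortComplex.Splitting.ofExactOfRetraction _ hex s hιs this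
  have r : Retract S.cycles (P.complex.X 1) := ⟨sp.s, S.toCycles, sp.s_g⟩
  have h1 : HasProjectiveDimensionLT S.cycles 1 := r.hasProjectiveDimensionLT 1
  have hse : (ShortComplex.mk S.iCycles S.g S.iCycles_g).ShortExact :=
    { exact := ShortComplex.exact_of_f_is_kernel _ S.cyclesIsKernel
      mono_f := inferInstance
      epi_g := inferInstanceAs (Epi (P.π.f 0)) }
  have h2 : HasProjectiveDimensionLT (P.complex.X 0) 2 :=
    hasProjectiveDimensionLT_of_ge _ 1 2 (by norm_num)
  exact hse.hasProjectiveDimensionLT_X₃ (n := 1) h1 h2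

/-- The splitting data attached to a morphism of projectives. -/
lemma hered_split (hH : Hereditary k R) {X Y : R} (hX : Projective X) (hY : Projective Y)
    (d : X ⟶ Y) :
    ∃ (Z B : R) (z : Z ⟶ X) (r : X ⟶ Z) (e : X ⟶ B) (s : B ⟶ X) (m : B ⟶ Y),
      Projective Z ∧ Projective B ∧ Mono m ∧ z ≫ r = 𝟙 Z ∧ z ≫ d = 0 ∧ e ≫ m = d ∧
      r ≫ z + e ≫ s = 𝟙 X := by
  let m : Abelian.image d ⟶ Y := Abelian.image.ι d
  let e : X ⟶ Abelian.image d := Abelian.factorThruImage d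
  have hem : e ≫ m = d := Abelian.image.fac d
  have hB : Projective (Abelian.image d) := by
    have hse : (ShortComplex.mk m (cokernel.π d) (kernel.condition _)).ShortExact :=
      { exact := ShortComplex.exact_of_f_is_kernel _ (kernelIsKernel _)
        mono_f := by dsimp; infer_instance
        epi_g := by dsimp; infer_instance }
    rw [projective_iff_hasProjectiveDimensionLT_one]
    exact hse.hasProjectiveDimensionLT_X₁ (n := 1) (inferInstanceAs (HasProjectiveDimensionLT Y 1))
      (hered_pd k R hH _)
  have hw : kernel.ι d ≫ e = 0 := by
    rw [← cancel_mono m, Category.assoc, hem]; simp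
  have hse : (ShortComplex.mk (kernel.ι d) e hw).ShortExact :=
    { exact := ShortComplex.exact_of_f_is_kernel _ 
        (isKernelOfComp m d (kernelIsKernel d) hw hem)
      mono_f := by dsimp; infer_instance
      epi_g := by dsimp [e]; infer_instance }
  have hZ : Projective (kernel d) := by
    rw [projective_iff_hasProjectiveDimensionLT_one]
    exact hse.hasProjectiveDimensionLT_X₁ (n := 1) (inferInstanceAs (HasProjectiveDimensionLT X 1))
      (hered_pd k R hH _)
  have : Projective (ShortComplex.mk (kernel.ι d) e hw).X₃ := hB
  let sp := hse.splittingOfProjective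
  exact ⟨kernel d, Abelian.image d, kernel.ι d, sp.r, e, sp.s, m, hZ, hB, by dsimp [m]; infer_instance,
    sp.f_r, kernel.condition d, hem, sp.id⟩

variable {R}

/-- If two maps from a projective to the cycles agree in homology they differ by a boundary. -/
lemma lift_of_class {X Y Z P : R} [Projective P] (d : X ⟶ Y) (d' : Y ⟶ Z) (w : d ≫ d' = 0)
    (f g : P ⟶ Y) (hf : f ≫ d' = 0) (hg : g ≫ d' = 0)
    (h : (ShortComplex.mk d d' w).liftCycles f hf ≫ (ShortComplex.mk d d' w).homologyπ =
      (ShortComplex.mk d d' w).liftCycles g hg ≫ (ShortComplex.mk d d' w).homologyπ) :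
    ∃ t : P ⟶ X, t ≫ d = f - g := by
  let S := ShortComplex.mk d d' w
  have hex : (ShortComplex.mk S.toCycles S.homologyπ (by simp)).Exact :=
    ShortComplex.exact_of_g_is_cokernel _ S.homologyIsCokernel
  have h' : (S.liftCycles f hf - S.liftCycles g hg) ≫ S.homologyπ = 0 := by
    rw [Preadditive.sub_comp, sub_eq_zero]; exact h
  refine ⟨hex.liftFromProjective _ h', ?_⟩
  have := hex.liftFromProjective_comp _ h'
  have h2 := congrArg (fun q => q ≫ S.iCycles) this
  simp only [Category.assoc, Preadditive.sub_comp, S.toCycles_i, S.liftCycles_i] at h2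
  exact h2

/-- A finite invariant on cycles valued in an object with finite homology. -/
lemma exists_class {X Y Z P : R} (hP : Projective P) (d : X ⟶ Y) (d' : Y ⟶ Z) (w : d ≫ d' = 0)
    (hfin : IsFinHom R (ShortComplex.mk d d' w).homology) :
    ∃ (F : Type u) (_ : Finite F) (c : (P ⟶ Y) → F),
      ∀ f g : P ⟶ Y, f ≫ d' = 0 → g ≫ d' = 0 → c f = c g → ∃ t : P ⟶ X, t ≫ d = f - g := by
  classical
  refine ⟨P ⟶ (ShortComplex.mk d d' w).homology, hfin P, fun f =>
    if hf : f ≫ d' = 0 then (ShortComplex.mk d d' w).liftCycles f hf ≫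
      (ShortComplex.mk d d' w).homologyπ else 0, ?_⟩
  intro f g hf hg h
  simp only [hf, hg, dif_pos] at h
  exact lift_of_class d d' w f g hf hg h

lemma two_step {C A F G : Type u} [AddCommGroup A] [Finite F] [Finite G] (B : AddSubgroup A)
    (K : A → Prop) (q : C → A) (φ : A → F) (ψ : A → G)
    (hφ : ∀ x y, φ (q x) = φ (q y) → ∃ κ, K κ ∧ q x - q y - κ ∈ B)
    (hψ : ∀ κ κ', K κ → K κ' → ψ κ = ψ κ' → κ - κ' ∈ B) :
    ∃ Γ : C → F × G, ∀ x y, Γ x = Γ y → q x - q y ∈ B := by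
  classical
  have hrep : ∀ x : C, ∃ y, φ (q y) = φ (q x) := fun x => ⟨x, rfl⟩
  let rep : F → C → C := fun f x0 => if h : ∃ y, φ (q y) = f then h.choose else x0
  have hrep : ∀ x, φ (q (rep (φ (q x)) x)) = φ (q x) := by
    intro x
    have h : ∃ y, φ (q y) = φ (q x) := ⟨x, rfl⟩
    simp only [rep, dif_pos h]
    exact h.choose_spec
  have hrep' : ∀ x y, φ (q x) = φ (q y) → rep (φ (q x)) x = rep (φ (q y)) y := by
    intro x y hxy
    have h : ∃ z, φ (q z) = φ (q y) := ⟨y, rfl⟩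
    simp only [rep, hxy, dif_pos h]
  choose κ hK hκ using fun x => hφ x (rep (φ (q x)) x) (hrep x).symm
  refine ⟨fun x => (φ (q x), ψ (κ x)), ?_⟩
  intro x y hxy
  simp only [Prod.mk.injEq] at hxy
  have h1 := hκ x
  have h2 := hκ y
  rw [hrep' x y hxy.1] at h1
  have h3 := hψ _ _ (hK x) (hK y) hxy.2
  have := B.add_mem (B.sub_mem h1 h2) h3
  convert this using 1
  abel

/-- Null-homotopic twisting pairs. -/
def nullPairs (M N : Z2Cx R) : AddSubgroup ((M.X0 ⟶ N.X1) × (M.X1 ⟶ N.X0)) where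
  carrier := {x | ∃ (h : M.X0 ⟶ N.X0) (g : M.X1 ⟶ N.X1),
    x.1 = h ≫ N.d0 - M.d0 ≫ g ∧ x.2 = g ≫ N.d1 - M.d1 ≫ h}
  zero_mem' := ⟨0, 0, by simp, by simp⟩
  add_mem' := by
    rintro x y ⟨h, g, h1, h2⟩ ⟨h', g', h1', h2'⟩
    refine ⟨h + h', g + g', ?_, ?_⟩
    · simp only [Prod.fst_add, h1, h1', Preadditive.add_comp, Preadditive.comp_add]; abel
    · simp only [Prod.snd_add, h2, h2', Preadditive.add_comp, Preadditive.comp_add]; abel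
  neg_mem' := by
    rintro x ⟨h, g, h1, h2⟩
    refine ⟨-h, -g, ?_, ?_⟩
    · simp only [Prod.fst_neg, h1, Preadditive.neg_comp, Preadditive.comp_neg]; abel
    · simp only [Prod.snd_neg, h2, Preadditive.neg_comp, Preadditive.comp_neg]; abel

/-- Cocycle condition for twisting pairs. -/
def IsCoc (M N : Z2Cx R) (x : (M.X0 ⟶ N.X1) × (M.X1 ⟶ N.X0)) : Prop :=
  x.1 ≫ N.d1 + M.d0 ≫ x.2 = 0 ∧ x.2 ≫ N.d0 + M.d1 ≫ x.1 = 0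

/-- A degreewise splitting of an extension of complexes. -/
structure Spl {M N : Z2Cx R} (t : ExtSES M N) where
  s0 : (ShortComplex.mk (Hom.f0 t.i) (Hom.f0 t.p) t.w0).Splitting
  s1 : (ShortComplex.mk (Hom.f1 t.i) (Hom.f1 t.p) t.w1).Splitting

namespace Spl

variable {M N : Z2Cx R} {t : ExtSES M N} (S : Spl t)

/-- section in degree 0 -/
def σ0 : M.X0 ⟶ t.E.X0 := S.s0.s
/-- section in degree 1 -/
def σ1 : M.X1 ⟶ t.E.X1 := S.s1.s
/-- retraction in degree 0 -/
def ρ0 : t.E.X0 ⟶ N.X0 := S.s0.r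
/-- retraction in degree 1 -/
def ρ1 : t.E.X1 ⟶ N.X1 := S.s1.r

lemma iρ0 : Hom.f0 t.i ≫ S.ρ0 = 𝟙 _ := S.s0.f_r
lemma iρ1 : Hom.f1 t.i ≫ S.ρ1 = 𝟙 _ := S.s1.f_r
lemma σp0 : S.σ0 ≫ Hom.f0 t.p = 𝟙 _ := S.s0.s_g
lemma σp1 : S.σ1 ≫ Hom.f1 t.p = 𝟙 _ := S.s1.s_g
lemma σρ0 : S.σ0 ≫ S.ρ0 = 0 := S.s0.s_r
lemma σρ1 : S.σ1 ≫ S.ρ1 = 0 := S.s1.s_r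
lemma id0 : S.ρ0 ≫ Hom.f0 t.i + Hom.f0 t.p ≫ S.σ0 = 𝟙 _ := S.s0.id
lemma id1 : S.ρ1 ≫ Hom.f1 t.i + Hom.f1 t.p ≫ S.σ1 = 𝟙 _ := S.s1.id

/-- The twisting pair of a split extension. -/
def pair : (M.X0 ⟶ N.X1) × (M.X1 ⟶ N.X0) :=
  (S.σ0 ≫ t.E.d0 ≫ S.ρ1, S.σ1 ≫ t.E.d1 ≫ S.ρ0)

lemma σd0 : S.σ0 ≫ t.E.d0 = S.pair.1 ≫ Hom.f1 t.i + M.d0 ≫ S.σ1 := by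
  have h : S.σ0 ≫ t.E.d0 ≫ Hom.f1 t.p = M.d0 := by
    rw [t.p.comm0, ← Category.assoc, S.σp0, Category.id_comp]
  calc S.σ0 ≫ t.E.d0 = (S.σ0 ≫ t.E.d0) ≫ (S.ρ1 ≫ Hom.f1 t.i + Hom.f1 t.p ≫ S.σ1) := by
        rw [S.id1, Category.comp_id]
    _ = (S.σ0 ≫ t.E.d0 ≫ S.ρ1) ≫ Hom.f1 t.i + (S.σ0 ≫ t.E.d0 ≫ Hom.f1 t.p) ≫ S.σ1 := by
        simp only [Preadditive.comp_add, Category.assoc]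
    _ = _ := by rw [h]; rfl

lemma σd1 : S.σ1 ≫ t.E.d1 = S.pair.2 ≫ Hom.f0 t.i + M.d1 ≫ S.σ0 := by
  have h : S.σ1 ≫ t.E.d1 ≫ Hom.f0 t.p = M.d1 := by
    rw [t.p.comm1, ← Category.assoc, S.σp1, Category.id_comp]
  calc S.σ1 ≫ t.E.d1 = (S.σ1 ≫ t.E.d1) ≫ (S.ρ0 ≫ Hom.f0 t.i + Hom.f0 t.p ≫ S.σ0) := by
        rw [S.id0, Category.comp_id]
    _ = (S.σ1 ≫ t.E.d1 ≫ S.ρ0) ≫ Hom.f0 t.i + (S.σ1 ≫ t.E.d1 ≫ Hom.f0 t.p) ≫ S.σ0 := by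
        simp only [Preadditive.comp_add, Category.assoc]
    _ = _ := by rw [h]; rfl

lemma d0_eq : t.E.d0 = S.ρ0 ≫ N.d0 ≫ Hom.f1 t.i +
    Hom.f0 t.p ≫ (S.pair.1 ≫ Hom.f1 t.i + M.d0 ≫ S.σ1) := by
  rw [← S.σd0, t.i.comm0, ← Category.assoc, ← Category.assoc, ← Preadditive.add_comp, S.id0,
    Category.id_comp]

lemma d1_eq : t.E.d1 = S.ρ1 ≫ N.d1 ≫ Hom.f0 t.i +
    Hom.f1 t.p ≫ (S.pair.2 ≫ Hom.f0 t.i + M.d1 ≫ S.σ0) := by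
  rw [← S.σd1, t.i.comm1, ← Category.assoc, ← Category.assoc, ← Preadditive.add_comp, S.id1,
    Category.id_comp]

lemma isCoc : IsCoc M N S.pair := by
  constructor
  · have h : (S.σ0 ≫ t.E.d0) ≫ t.E.d1 ≫ S.ρ0 = 0 := by
      rw [Category.assoc, ← Category.assoc t.E.d0, t.E.d01]; simp
    rw [S.σd0, Preadditive.add_comp, Category.assoc, ← Category.assoc (Hom.f1 t.i),
      ← t.i.comm1, Category.assoc, S.iρ0, Category.comp_id, Category.assoc] at h
    exact h
  · have h : (S.σ1 ≫ t.E.d1) ≫ t.E.d0 ≫ S.ρ1 = 0 := by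
      rw [Category.assoc, ← Category.assoc t.E.d1, t.E.d10]; simp
    rw [S.σd1, Preadditive.add_comp, Category.assoc, ← Category.assoc (Hom.f0 t.i),
      ← t.i.comm0, Category.assoc, S.iρ1, Category.comp_id, Category.assoc] at h
    exact h

variable {t' : ExtSES M N} (S' : Spl t')

lemma coc_sub_aux (x : (M.X0 ⟶ N.X1) × (M.X1 ⟶ N.X0)) : x - x ∈ nullPairs M N := by
  rw [sub_self]
  exact (nullPairs M N).zero_mem

/-- The morphism of extensions defined by a homotopy. -/
def mor (h : M.X0 ⟶ N.X0) (g : M.X1 ⟶ N.X1)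
    (h0 : S.pair.1 + M.d0 ≫ g = S'.pair.1 + h ≫ N.d0)
    (h1 : S.pair.2 + M.d1 ≫ h = S'.pair.2 + g ≫ N.d1) : t.E ⟶ t'.E :=
  Hom.mk (S.ρ0 ≫ Hom.f0 t'.i + Hom.f0 t.p ≫ (S'.σ0 + h ≫ Hom.f0 t'.i))
    (S.ρ1 ≫ Hom.f1 t'.i + Hom.f1 t.p ≫ (S'.σ1 + g ≫ Hom.f1 t'.i))
    (by
      have hi : Hom.f1 t.i ≫ (S.ρ1 ≫ Hom.f1 t'.i + Hom.f1 t.p ≫ (S'.σ1 + g ≫ Hom.f1 t'.i)) =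
          Hom.f1 t'.i := by
        rw [Preadditive.comp_add, ← Category.assoc, S.iρ1, ← Category.assoc, t.w1]; simp
      have hs : S.σ1 ≫ (S.ρ1 ≫ Hom.f1 t'.i + Hom.f1 t.p ≫ (S'.σ1 + g ≫ Hom.f1 t'.i)) =
          S'.σ1 + g ≫ Hom.f1 t'.i := by
        rw [Preadditive.comp_add, ← Category.assoc, S.σρ1, ← Category.assoc, S.σp1]; simp
      have h0' : S.pair.1 ≫ Hom.f1 t'.i + M.d0 ≫ g ≫ Hom.f1 t'.i =
          S'.pair.1 ≫ Hom.f1 t'.i + h ≫ N.d0 ≫ Hom.f1 t'.i := by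
        simpa only [Preadditive.add_comp, Category.assoc] using congrArg (· ≫ Hom.f1 t'.i) h0
      have e1 : S.pair.1 ≫ Hom.f1 t'.i + M.d0 ≫ (S'.σ1 + g ≫ Hom.f1 t'.i) =
          (S'.pair.1 ≫ Hom.f1 t'.i + M.d0 ≫ S'.σ1) + h ≫ N.d0 ≫ Hom.f1 t'.i := by
        rw [Preadditive.comp_add]
        calc _ = (S.pair.1 ≫ Hom.f1 t'.i + M.d0 ≫ g ≫ Hom.f1 t'.i) + M.d0 ≫ S'.σ1 := by abel
          _ = _ := by rw [h0']; abel
      rw [S.d0_eq]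
      simp only [Preadditive.add_comp, Category.assoc, hi, hs]
      rw [e1, ← S'.σd0, t'.i.comm0])
    (by
      have hi : Hom.f0 t.i ≫ (S.ρ0 ≫ Hom.f0 t'.i + Hom.f0 t.p ≫ (S'.σ0 + h ≫ Hom.f0 t'.i)) =
          Hom.f0 t'.i := by
        rw [Preadditive.comp_add, ← Category.assoc, S.iρ0, ← Category.assoc, t.w0]; simp
      have hs : S.σ0 ≫ (S.ρ0 ≫ Hom.f0 t'.i + Hom.f0 t.p ≫ (S'.σ0 + h ≫ Hom.f0 t'.i)) =
          S'.σ0 + h ≫ Hom.f0 t'.i := by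
        rw [Preadditive.comp_add, ← Category.assoc, S.σρ0, ← Category.assoc, S.σp0]; simp
      have h0' : S.pair.2 ≫ Hom.f0 t'.i + M.d1 ≫ h ≫ Hom.f0 t'.i =
          S'.pair.2 ≫ Hom.f0 t'.i + g ≫ N.d1 ≫ Hom.f0 t'.i := by
        simpa only [Preadditive.add_comp, Category.assoc] using congrArg (· ≫ Hom.f0 t'.i) h1
      have e1 : S.pair.2 ≫ Hom.f0 t'.i + M.d1 ≫ (S'.σ0 + h ≫ Hom.f0 t'.i) =
          (S'.pair.2 ≫ Hom.f0 t'.i + M.d1 ≫ S'.σ0) + g ≫ N.d1 ≫ Hom.f0 t'.i := by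
        rw [Preadditive.comp_add]
        calc _ = (S.pair.2 ≫ Hom.f0 t'.i + M.d1 ≫ h ≫ Hom.f0 t'.i) + M.d1 ≫ S'.σ0 := by abel
          _ = _ := by rw [h0']; abel
      rw [S.d1_eq]
      simp only [Preadditive.add_comp, Category.assoc, hi, hs]
      rw [e1, ← S'.σd1, t'.i.comm1])

lemma inv_aux {A B E E' : R} {i : A ⟶ E} {p : E ⟶ B} {r : E ⟶ A} {s : B ⟶ E}
    {i' : A ⟶ E'} {p' : E' ⟶ B} {r' : E' ⟶ A} {s' : B ⟶ E'} (h : B ⟶ A)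
    (hid : r ≫ i + p ≫ s = 𝟙 E) (ir' : i' ≫ r' = 𝟙 A) (sp' : s' ≫ p' = 𝟙 B)
    (ip' : i' ≫ p' = 0) (sr' : s' ≫ r' = 0) :
    (r ≫ i' + p ≫ (s' + h ≫ i')) ≫ (r' ≫ i + p' ≫ (s + (-h) ≫ i)) = 𝟙 E := by
  have h1 : i' ≫ (r' ≫ i + p' ≫ (s + (-h) ≫ i)) = i := by
    rw [Preadditive.comp_add, ← Category.assoc, ir', ← Category.assoc, ip']; simp
  have h2 : s' ≫ (r' ≫ i + p' ≫ (s + (-h) ≫ i)) = s + (-h) ≫ i := by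
    rw [Preadditive.comp_add, ← Category.assoc, sr', ← Category.assoc, sp']; simp
  simp only [Preadditive.add_comp, Category.assoc] at h1 h2 ⊢
  rw [h1, h2, ← hid]
  simp

lemma equiv_of_null (hn : S.pair - S'.pair ∈ nullPairs M N) : ExtEquiv M N t t' := by
  obtain ⟨h, g, h0, h1⟩ := hn
  have h0' : S.pair.1 + M.d0 ≫ g = S'.pair.1 + h ≫ N.d0 := by
    rw [Prod.fst_sub, sub_eq_iff_eq_add] at h0; rw [h0]; abel
  have h1' : S.pair.2 + M.d1 ≫ h = S'.pair.2 + g ≫ N.d1 := by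
    rw [Prod.snd_sub, sub_eq_iff_eq_add] at h1; rw [h1]; abel
  have h0'' : S'.pair.1 + M.d0 ≫ (-g) = S.pair.1 + (-h) ≫ N.d0 := by
    simp only [Preadditive.comp_neg, Preadditive.neg_comp, ← sub_eq_add_neg]
    rw [sub_eq_sub_iff_add_eq_add, ← h0']
  have h1'' : S'.pair.2 + M.d1 ≫ (-h) = S.pair.2 + (-g) ≫ N.d1 := by
    simp only [Preadditive.comp_neg, Preadditive.neg_comp, ← sub_eq_add_neg]
    rw [sub_eq_sub_iff_add_eq_add, ← h1']
  refine ⟨⟨S.mor S' h g h0' h1', S'.mor S (-h) (-g) h0'' h1'', ?_, ?_⟩, ?_, ?_⟩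
  · apply Hom.ext
    · exact inv_aux h S.id0 S'.iρ0 S'.σp0 t'.w0 S'.σρ0
    · exact inv_aux g S.id1 S'.iρ1 S'.σp1 t'.w1 S'.σρ1
  · apply Hom.ext
    · have := inv_aux (-h) S'.id0 S.iρ0 S.σp0 t.w0 S.σρ0
      rw [neg_neg] at this; exact this
    · have := inv_aux (-g) S'.id1 S.iρ1 S.σp1 t.w1 S.σρ1
      rw [neg_neg] at this; exact this
  · apply Hom.ext
    · change Hom.f0 t.i ≫ (S.ρ0 ≫ Hom.f0 t'.i + Hom.f0 t.p ≫ (S'.σ0 + h ≫ Hom.f0 t'.i)) = _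
      rw [Preadditive.comp_add, ← Category.assoc, S.iρ0, ← Category.assoc, t.w0]; simp
    · change Hom.f1 t.i ≫ (S.ρ1 ≫ Hom.f1 t'.i + Hom.f1 t.p ≫ (S'.σ1 + g ≫ Hom.f1 t'.i)) = _
      rw [Preadditive.comp_add, ← Category.assoc, S.iρ1, ← Category.assoc, t.w1]; simp
  · apply Hom.ext
    · change (S.ρ0 ≫ Hom.f0 t'.i + Hom.f0 t.p ≫ (S'.σ0 + h ≫ Hom.f0 t'.i)) ≫ Hom.f0 t'.p = _
      simp [Preadditive.add_comp, t'.w0, S'.σp0]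
    · change (S.ρ1 ≫ Hom.f1 t'.i + Hom.f1 t.p ≫ (S'.σ1 + g ≫ Hom.f1 t'.i)) ≫ Hom.f1 t'.p = _
      simp [Preadditive.add_comp, t'.w1, S'.σp1]

end Spl

lemma IsCoc.sub {M N : Z2Cx R} {x y : (M.X0 ⟶ N.X1) × (M.X1 ⟶ N.X0)}
    (hx : IsCoc M N x) (hy : IsCoc M N y) : IsCoc M N (x - y) := by
  constructor
  · have : (x.1 ≫ N.d1 + M.d0 ≫ x.2) - (y.1 ≫ N.d1 + M.d0 ≫ y.2) = 0 := by
      rw [hx.1, hy.1, sub_zero]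
    rw [← this]
    simp only [Prod.fst_sub, Prod.snd_sub, Preadditive.sub_comp, Preadditive.comp_sub]; abel
  · have : (x.2 ≫ N.d0 + M.d1 ≫ x.1) - (y.2 ≫ N.d0 + M.d1 ≫ y.1) = 0 := by
      rw [hx.2, hy.2, sub_zero]
    rw [← this]
    simp only [Prod.fst_sub, Prod.snd_sub, Preadditive.sub_comp, Preadditive.comp_sub]; abel

lemma isCoc_null {M N : Z2Cx R} (h : M.X0 ⟶ N.X0) (g : M.X1 ⟶ N.X1) :
    IsCoc M N (h ≫ N.d0 - M.d0 ≫ g, g ≫ N.d1 - M.d1 ≫ h) := by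
  have e1 : M.d0 ≫ M.d1 ≫ h = 0 := by rw [← Category.assoc, M.d01, zero_comp]
  have e2 : M.d1 ≫ M.d0 ≫ g = 0 := by rw [← Category.assoc, M.d10, zero_comp]
  constructor
  · simp [Preadditive.sub_comp, Preadditive.comp_sub, N.d01, e1]
  · simp [Preadditive.sub_comp, Preadditive.comp_sub, N.d10, e2]

end Helpers

theorem stmt9 (hH : Hereditary k R) (hc : CondC R) (hd : CondD R) (he : CondE R)
    (M N : Z2Cx R) (hM : FinCx R M) (hN : FinCx R N) :
    Finite (ExtCl M N) := by
  obtain ⟨hM0, hM1, -, -⟩ := hM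
  obtain ⟨-, -, hN0, hN1⟩ := hN
  obtain ⟨Z0, B0, z0, r0, e0, s0, m0, hZ0, hB0, hm0, zr0, zd0, em0, id0⟩ :=
    hered_split k R hH hM0 hM1 M.d0
  obtain ⟨Z1, B1, z1, r1, e1, s1, m1, hZ1, hB1, hm1, zr1, zd1, em1, id1⟩ :=
    hered_split k R hH hM1 hM0 M.d1
  obtain ⟨F1, hF1, c1, hc1⟩ := exists_class hZ0 N.d0 N.d1 N.d01 hN1
  obtain ⟨F0, hF0, c0, hc0⟩ := exists_class hZ1 N.d1 N.d0 N.d10 hN0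
  obtain ⟨G1, hG1, b1, hb1⟩ := exists_class hB0 N.d0 N.d1 N.d01 hN1
  obtain ⟨G0, hG0, b0, hb0⟩ := exists_class hB1 N.d1 N.d0 N.d10 hN0
  have S : ∀ t : ExtSES M N, Spl t := fun t => by
    have h0 : Projective (ShortComplex.mk (Hom.f0 t.i) (Hom.f0 t.p) t.w0).X₃ := hM0
    have h1 : Projective (ShortComplex.mk (Hom.f1 t.i) (Hom.f1 t.p) t.w1).X₃ := hM1
    exact ⟨t.ex0.splittingOfProjective, t.ex1.splittingOfProjective⟩
  have de1 : M.d0 ≫ e1 = 0 := by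
    rw [← cancel_mono m1, Category.assoc, em1, M.d01, zero_comp]
  have de0 : M.d1 ≫ e0 = 0 := by
    rw [← cancel_mono m0, Category.assoc, em0, M.d10, zero_comp]
  have dz1 : M.d0 ≫ r1 ≫ z1 = M.d0 := by
    have := congrArg (M.d0 ≫ ·) id1
    simpa [Preadditive.comp_add, ← Category.assoc, de1] using this
  have dz0 : M.d1 ≫ r0 ≫ z0 = M.d1 := by
    have := congrArg (M.d1 ≫ ·) id0
    simpa [Preadditive.comp_add, ← Category.assoc, de0] using this
  let K : (M.X0 ⟶ N.X1) × (M.X1 ⟶ N.X0) → Prop := fun x =>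
    IsCoc M N x ∧ z0 ≫ x.1 = 0 ∧ z1 ≫ x.2 = 0
  have hK1 : ∀ x, K x → x.1 ≫ N.d1 = 0 := by
    rintro x ⟨hx, -, hx1⟩
    have h := hx.1
    rw [← dz1, Category.assoc, Category.assoc, hx1] at h
    simpa using h
  have hK0 : ∀ x, K x → x.2 ≫ N.d0 = 0 := by
    rintro x ⟨hx, hx0, -⟩
    have h := hx.2
    rw [← dz0, Category.assoc, Category.assoc, hx0] at h
    simpa using h
  obtain ⟨Γ, hΓ⟩ := two_step (C := ExtSES M N) (F := F1 × F0) (G := G1 × G0) (nullPairs M N) K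
    (fun t => (S t).pair) (fun x => (c1 (z0 ≫ x.1), c0 (z1 ≫ x.2)))
    (fun x => (b1 (s0 ≫ x.1), b0 (s1 ≫ x.2)))
    (by
      intro t t' h
      have hcx := (S t).isCoc
      have hcy := (S t').isCoc
      have hz : ∀ x, IsCoc M N x → (z0 ≫ x.1) ≫ N.d1 = 0 := by
        intro x hx
        have := congrArg (z0 ≫ ·) hx.1
        simpa [Preadditive.comp_add, ← Category.assoc, zd0] using this
      have hz' : ∀ x, IsCoc M N x → (z1 ≫ x.2) ≫ N.d0 = 0 := by
        intro x hx
        have := congrArg (z1 ≫ ·) hx.2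
        simpa [Preadditive.comp_add, ← Category.assoc, zd1] using this
      simp only [Prod.mk.injEq] at h
      obtain ⟨u, hu⟩ := hc1 _ _ (hz _ hcx) (hz _ hcy) h.1
      obtain ⟨v, hv⟩ := hc0 _ _ (hz' _ hcx) (hz' _ hcy) h.2
      let nl : (M.X0 ⟶ N.X1) × (M.X1 ⟶ N.X0) :=
        ((r0 ≫ u) ≫ N.d0 - M.d0 ≫ (r1 ≫ v), (r1 ≫ v) ≫ N.d1 - M.d1 ≫ (r0 ≫ u))
      refine ⟨(S t).pair - (S t').pair - nl, ⟨(hcx.sub hcy).sub (isCoc_null _ _), ?_, ?_⟩, ?_⟩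
      · have a1 : z0 ≫ M.d0 ≫ r1 ≫ v = 0 := by rw [← Category.assoc, zd0, zero_comp]
        have a2 : z0 ≫ r0 ≫ u ≫ N.d0 = u ≫ N.d0 := by
          rw [← Category.assoc, zr0, Category.id_comp]
        simp only [nl, Prod.fst_sub, Preadditive.comp_sub, Category.assoc, a1, a2]
        rw [hu]; abel
      · have a1 : z1 ≫ M.d1 ≫ r0 ≫ u = 0 := by rw [← Category.assoc, zd1, zero_comp]
        have a2 : z1 ≫ r1 ≫ v ≫ N.d1 = v ≫ N.d1 := by
          rw [← Category.assoc, zr1, Category.id_comp]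
        simp only [nl, Prod.snd_sub, Preadditive.comp_sub, Category.assoc, a1, a2]
        rw [hv]; abel
      · rw [sub_sub_cancel]
        exact ⟨_, _, rfl, rfl⟩)
    (by
      intro x y hx hy h
      simp only [Prod.mk.injEq] at h
      obtain ⟨u, hu⟩ := hb1 _ _ (by rw [Category.assoc, hK1 x hx, comp_zero])
        (by rw [Category.assoc, hK1 y hy, comp_zero]) h.1
      obtain ⟨v, hv⟩ := hb0 _ _ (by rw [Category.assoc, hK0 x hx, comp_zero])
        (by rw [Category.assoc, hK0 y hy, comp_zero]) h.2
      have f0 : ∀ x, K x → e0 ≫ s0 ≫ x.1 = x.1 := by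
        intro x hx
        have := congrArg (· ≫ x.1) id0
        simpa [Preadditive.add_comp, Category.assoc, hx.2.1] using this
      have f1 : ∀ x, K x → e1 ≫ s1 ≫ x.2 = x.2 := by
        intro x hx
        have := congrArg (· ≫ x.2) id1
        simpa [Preadditive.add_comp, Category.assoc, hx.2.2] using this
      refine ⟨e0 ≫ u, e1 ≫ v, ?_, ?_⟩
      · rw [← Category.assoc M.d0, de1, zero_comp, sub_zero, Category.assoc, hu,
          Preadditive.comp_sub, f0 x hx, f0 y hy, Prod.fst_sub]
      · rw [← Category.assoc M.d1, de0, zero_comp, sub_zero, Category.assoc, hv,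
          Preadditive.comp_sub, f1 x hx, f1 y hy, Prod.snd_sub])
  refine Finite.of_injective (fun x : ExtCl M N => Γ (Quot.out x)) ?_
  intro x y hxy
  rw [← Quot.out_eq x, ← Quot.out_eq y]
  exact Quot.sound ((S _).equiv_of_null (S _) (hΓ _ _ hxy))

end
end

section
/- For any projective object P ∈ P and any complex M• ∈ C_fin(P), the following identities hold in the Hall algebra H(C_fin(P)): [K_P] ⋆ [M•] = v^{⟨[P],[M•]⟩} [K_P ⊕ M•] and [M•] ⋆ [K_P] = v^{−⟨[M•],[P]⟩} [K_P ⊕ M•], where [M•] = [M₀] − [M₁] ∈ K(R). -/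
set_option linter.unusedSectionVars false

open CategoryTheory CategoryTheory.Limits Opposite

noncomputable section

universe u

variable (k : Type) [Field k] [Fintype k]
variable (R : Type u) [SmallCategory R] [Abelian R] [Linear k R] [EnoughProjectives R]

attribute [local instance] Classical.propDecidable

/-- The class `[M•] = [M₀] - [M₁]` in `K(R)` of a `ℤ/2`-graded complex. -/
def clsOf (M : Z2Cx R) : K0 R := K0.cls R M.X0 - K0.cls R M.X1

/-- Isomorphism of `ℤ/2`-graded complexes, as a relation. -/
def cxRel (M N : Z2Cx R) : Prop := Nonempty (M ≅ N)

/-- Isomorphism classes of `ℤ/2`-graded complexes. -/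
def CxCls := Quot (cxRel R)

/-- The isomorphism class of a complex. -/
def ccls (M : Z2Cx R) : CxCls R := Quot.mk _ M

/-- The isomorphism class of the middle term of an extension class. -/
def extMid {M N : Z2Cx R} : Z2Cx.ExtCl M N → CxCls R :=
  Quot.lift (fun s => ccls R s.E) (fun s t h => by
    obtain ⟨φ, -, -⟩ := h
    exact Quot.sound ⟨φ⟩)

/-- `|Ext¹_{C(R)}(M•,N•)_{P•}|` : the number of extension classes of `M•` by `N•` whose
middle term has isomorphism class `c`. -/
def extCount (M N : Z2Cx R) (c : CxCls R) : ℕ :=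
  Nat.card {x : Z2Cx.ExtCl M N // extMid R x = c}

/-- The `ℚ`-valued extension of the Euler form to `K(R) × K(R)`
(which exists by condition (d)). -/
structure EulerData where
  eQ : K0 R →+ K0 R →+ ℚ
  compat : ∀ (M A : R), IsFinHom R A →
    eQ (K0.cls R M) (K0.cls R A) = euler k R M A

/-- A choice, for every complex of projectives `M•`, of the classes `[M₁⁺]` and `[M₀⁻]`
of the components of the canonical decomposition `M• = M•⁺ ⊕ M•⁻ = C_f ⊕ C_g^†`. -/
structure DecData where
  cplus : Z2Cx R → K0 R
  cminus : Z2Cx R → K0 R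
  spec : ∀ M : Z2Cx R, Projective M.X0 → Projective M.X1 →
    ∃ (P Q P' Q' : R) (f : P ⟶ Q) (g : P' ⟶ Q'),
      Projective P ∧ Projective Q ∧ Projective P' ∧ Projective Q' ∧
      Mono f ∧ Mono g ∧
      Nonempty (M ≅ Z2Cx.dsum R (Z2Cx.Cf R f) (Z2Cx.dagger R (Z2Cx.Cf R g))) ∧
      cplus M = K0.cls R P ∧ cminus M = K0.cls R P'

variable {k R}

/-- `μ(M•,N•) = Σ_{i,j} ⟨[Mᵢ^{ε(j)}], [N_{j+1}^{ε(i)}]⟩`. -/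
def mu (ed : EulerData k R) (dd : DecData R) (M N : Z2Cx R) : ℚ :=
  ed.eQ (K0.cls R M.X0 - dd.cminus M) (dd.cplus N) +
    ed.eQ (dd.cplus M) (K0.cls R N.X1 - dd.cplus N) +
    ed.eQ (dd.cminus M) (K0.cls R N.X0 - dd.cminus N) +
    ed.eQ (K0.cls R M.X1 - dd.cplus M) (dd.cminus N)

/-- `h(M•,N•) = q^{μ(M•,N•)} ⬝ |Hom_{C(R)}(H•(M•), H•(N•))|`. -/
def hVal (ed : EulerData k R) (dd : DecData R) (M N : Z2Cx R) : ℝ :=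
  (Fintype.card k : ℝ) ^ ((mu ed dd M N : ℚ) : ℝ) *
    (Nat.card (Z2Cx.Hcx R M ⟶ Z2Cx.Hcx R N) : ℝ)

/-- The structure constants of the Hall algebra `H(C_fin(P))`:
the coefficient of the basis element `c` in `[M•] ⋆ [N•]`. -/
def hallCoeff (v : ℝ) (ed : EulerData k R) (dd : DecData R) (M N : Z2Cx R)
    (c : CxCls R) : ℂ :=
  (((v ^ (((ed.eQ (K0.cls R M.X0) (K0.cls R N.X0) +
      ed.eQ (K0.cls R M.X1) (K0.cls R N.X1) : ℚ)) : ℝ) *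
    (extCount R M N c : ℝ) / hVal ed dd M N : ℝ)) : ℂ)

open Z2Cx

section Helpers

lemma hh_comm0 {M N : Z2Cx R} (f : M ⟶ N) : M.d0 ≫ Hom.f1 f = Hom.f0 f ≫ N.d0 := Hom.comm0 f
lemma hh_comm1 {M N : Z2Cx R} (f : M ⟶ N) : M.d1 ≫ Hom.f0 f = Hom.f1 f ≫ N.d1 := Hom.comm1 f

/-- A componentwise isomorphism of complexes is an isomorphism. -/
def hhIso {M N : Z2Cx R} (f : M ⟶ N) (h0 : IsIso (Hom.f0 f)) (h1 : IsIso (Hom.f1 f)) :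
    M ≅ N where
  hom := f
  inv := ⟨inv (Hom.f0 f), inv (Hom.f1 f), by
    rw [IsIso.comp_inv_eq, Category.assoc, hh_comm0, IsIso.inv_hom_id_assoc], by
    rw [IsIso.comp_inv_eq, Category.assoc, hh_comm1, IsIso.inv_hom_id_assoc]⟩
  hom_inv_id := Hom.ext (IsIso.hom_inv_id (Hom.f0 f)) (IsIso.hom_inv_id (Hom.f1 f))
  inv_hom_id := Hom.ext (IsIso.inv_hom_id (Hom.f0 f)) (IsIso.inv_hom_id (Hom.f1 f))

/-- The split extension of `M` by `N`. -/
def hhSplit (M N : Z2Cx R) : ExtSES M N where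
  E := dsum R N M
  i := ⟨biprod.inl, biprod.inl, by simp [dsum], by simp [dsum]⟩
  p := ⟨biprod.snd, biprod.snd, by simp [dsum], by simp [dsum]⟩
  w0 := biprod.inl_snd
  w1 := biprod.inl_snd
  ex0 := (ShortComplex.Splitting.ofHasBinaryBiproduct N.X0 M.X0).shortExact
  ex1 := (ShortComplex.Splitting.ofHasBinaryBiproduct N.X1 M.X1).shortExact

/-- A morphism of extensions is an equivalence. -/
lemma hh_equiv {M N : Z2Cx R} (s t : ExtSES M N) (f : s.E ⟶ t.E) (hi : s.i ≫ f = t.i)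
    (hp : f ≫ t.p = s.p) : ExtEquiv M N s t := by
  have i0 : Hom.f0 s.i ≫ Hom.f0 f = Hom.f0 t.i := congrArg Hom.f0 hi
  have i1 : Hom.f1 s.i ≫ Hom.f1 f = Hom.f1 t.i := congrArg Hom.f1 hi
  have p0 : Hom.f0 f ≫ Hom.f0 t.p = Hom.f0 s.p := congrArg Hom.f0 hp
  have p1 : Hom.f1 f ≫ Hom.f1 t.p = Hom.f1 s.p := congrArg Hom.f1 hp
  have h0 : IsIso (Hom.f0 f) := by
    let φ : ShortComplex.mk _ _ s.w0 ⟶ ShortComplex.mk _ _ t.w0 :=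
      { τ₁ := 𝟙 _, τ₂ := Hom.f0 f, τ₃ := 𝟙 _
        comm₁₂ := by simp [i0], comm₂₃ := by simp [p0] }
    have : IsIso φ.τ₁ := inferInstanceAs (IsIso (𝟙 _))
    have : IsIso φ.τ₃ := inferInstanceAs (IsIso (𝟙 _))
    exact ShortComplex.isIso₂_of_shortExact_of_isIso₁₃ φ s.ex0 t.ex0
  have h1 : IsIso (Hom.f1 f) := by
    let φ : ShortComplex.mk _ _ s.w1 ⟶ ShortComplex.mk _ _ t.w1 :=
      { τ₁ := 𝟙 _, τ₂ := Hom.f1 f, τ₃ := 𝟙 _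
        comm₁₂ := by simp [i1], comm₂₃ := by simp [p1] }
    have : IsIso φ.τ₁ := inferInstanceAs (IsIso (𝟙 _))
    have : IsIso φ.τ₃ := inferInstanceAs (IsIso (𝟙 _))
    exact ShortComplex.isIso₂_of_shortExact_of_isIso₁₃ φ s.ex1 t.ex1
  exact ⟨hhIso f h0 h1, hi, hp⟩

/-- An extension with a section splits. -/
lemma hh_sect {M N : Z2Cx R} (s : ExtSES M N) (σ : M ⟶ s.E) (h0 : Hom.f0 σ ≫ Hom.f0 s.p = 𝟙 _)
    (h1 : Hom.f1 σ ≫ Hom.f1 s.p = 𝟙 _) : ExtEquiv M N (hhSplit M N) s := by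
  have c0 : biprod.map N.d0 M.d0 ≫ biprod.desc (Hom.f1 s.i) (Hom.f1 σ) =
      biprod.desc (Hom.f0 s.i) (Hom.f0 σ) ≫ s.E.d0 := by
    apply biprod.hom_ext' <;> simp [hh_comm0]
  have c1 : biprod.map N.d1 M.d1 ≫ biprod.desc (Hom.f0 s.i) (Hom.f0 σ) =
      biprod.desc (Hom.f1 s.i) (Hom.f1 σ) ≫ s.E.d1 := by
    apply biprod.hom_ext' <;> simp [hh_comm1]
  have e0 : biprod.desc (Hom.f0 s.i) (Hom.f0 σ) ≫ Hom.f0 s.p = biprod.snd := by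
    apply biprod.hom_ext' <;> simp [h0, s.w0]
  have e1 : biprod.desc (Hom.f1 s.i) (Hom.f1 σ) ≫ Hom.f1 s.p = biprod.snd := by
    apply biprod.hom_ext' <;> simp [h1, s.w1]
  exact hh_equiv _ _ ⟨_, _, c0, c1⟩ (Hom.ext (biprod.inl_desc _ _) (biprod.inl_desc _ _))
    (Hom.ext e0 e1)

lemma hh_lift {P E : R} (hP : Projective P) (p : E ⟶ P) (hp : Epi p) :
    ∃ σ : P ⟶ E, σ ≫ p = 𝟙 P :=
  ⟨Projective.factorThru (𝟙 P) p, Projective.factorThru_comp _ _⟩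

lemma hh_inr {A B P : R} (u : A ⊞ B ⟶ P) (w : P ⟶ A ⊞ B) (h : u ≫ w = 𝟙 _)
    (e : biprod.inr ≫ u = 0) : IsZero B := by
  have e2 : (biprod.inr : B ⟶ A ⊞ B) = 0 := by
    rw [← Category.comp_id (biprod.inr : B ⟶ A ⊞ B), ← h, ← Category.assoc, e, zero_comp]
  rw [IsZero.iff_id_eq_zero, ← biprod.inr_snd (X := A), e2, zero_comp]

/-- Extensions of `K_P` split. -/
lemma hh_left (P : R) (hP : Projective P) (M : Z2Cx R) (s : ExtSES (KP R P) M) :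
    ExtEquiv (KP R P) M (hhSplit (KP R P) M) s := by
  obtain ⟨σ, hσ⟩ := hh_lift hP (Hom.f1 s.p) s.ex1.epi_g
  have hd : s.E.d1 ≫ Hom.f0 s.p = Hom.f1 s.p :=
    (hh_comm1 s.p).trans (Category.comp_id _)
  have h0 : (σ ≫ s.E.d1) ≫ Hom.f0 s.p = 𝟙 P := by
    rw [Category.assoc]
    exact (congrArg (σ ≫ ·) hd).trans hσ
  have c0 : (σ ≫ s.E.d1) ≫ s.E.d0 = 0 := by
    rw [Category.assoc, s.E.d10, comp_zero]
  exact hh_sect s ⟨σ ≫ s.E.d1, σ, zero_comp.trans c0.symm, Category.id_comp _⟩ h0 hσ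

/-- An extension with a retraction splits. -/
lemma hh_retr {M N : Z2Cx R} (s : ExtSES M N) (ρ : s.E ⟶ N) (h0 : Hom.f0 s.i ≫ Hom.f0 ρ = 𝟙 _)
    (h1 : Hom.f1 s.i ≫ Hom.f1 ρ = 𝟙 _) : ExtEquiv M N s (hhSplit M N) := by
  have c0 : s.E.d0 ≫ biprod.lift (Hom.f1 ρ) (Hom.f1 s.p) =
      biprod.lift (Hom.f0 ρ) (Hom.f0 s.p) ≫ biprod.map N.d0 M.d0 := by
    apply biprod.hom_ext <;> simp [hh_comm0]
  have c1 : s.E.d1 ≫ biprod.lift (Hom.f0 ρ) (Hom.f0 s.p) =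
      biprod.lift (Hom.f1 ρ) (Hom.f1 s.p) ≫ biprod.map N.d1 M.d1 := by
    apply biprod.hom_ext <;> simp [hh_comm1]
  have e0 : Hom.f0 s.i ≫ biprod.lift (Hom.f0 ρ) (Hom.f0 s.p) = biprod.inl := by
    apply biprod.hom_ext <;> simp [h0, s.w0]
  have e1 : Hom.f1 s.i ≫ biprod.lift (Hom.f1 ρ) (Hom.f1 s.p) = biprod.inl := by
    apply biprod.hom_ext <;> simp [h1, s.w1]
  exact hh_equiv _ _ ⟨_, _, c0, c1⟩ (Hom.ext e0 e1)
    (Hom.ext (biprod.lift_snd _ _) (biprod.lift_snd _ _))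

/-- Extensions by `K_P` split. -/
lemma hh_right (P : R) (M : Z2Cx R) (h0 : Projective M.X0) (s : ExtSES M (KP R P)) :
    ExtEquiv M (KP R P) s (hhSplit M (KP R P)) := by
  obtain ⟨r, hr⟩ : ∃ r : s.E.X0 ⟶ P, Hom.f0 s.i ≫ r = 𝟙 P := by
    have : Projective (ShortComplex.mk _ _ s.w0).X₃ := h0
    exact ⟨s.ex0.splittingOfProjective.r, s.ex0.splittingOfProjective.f_r⟩
  have hd : Hom.f1 s.i ≫ s.E.d1 = Hom.f0 s.i :=
    (hh_comm1 s.i).symm.trans (Category.id_comp _)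
  have hr1 : Hom.f1 s.i ≫ s.E.d1 ≫ r = 𝟙 P := by
    rw [← Category.assoc]
    exact (congrArg (· ≫ r) hd).trans hr
  have c0 : s.E.d0 ≫ s.E.d1 ≫ r = 0 := by
    rw [← Category.assoc, s.E.d01, zero_comp]
  exact hh_retr s ⟨r, s.E.d1 ≫ r, c0.trans comp_zero.symm, (Category.comp_id _).symm⟩ hr hr1

/-- The symmetry of the direct sum. -/
lemma hh_braid (M N : Z2Cx R) : ccls R (dsum R M N) = ccls R (dsum R N M) := by
  refine Quot.sound ⟨hhIso ⟨(biprod.braiding _ _).hom, (biprod.braiding _ _).hom, ?_, ?_⟩ ?_ ?_⟩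
  · apply biprod.hom_ext <;> simp [dsum]
  · apply biprod.hom_ext <;> simp [dsum]
  · exact (biprod.braiding _ _).isIso_hom
  · exact (biprod.braiding _ _).isIso_hom

lemma hh_count (M N : Z2Cx R) (h : ∀ x : ExtCl M N, x = Quot.mk _ (hhSplit M N)) (c : CxCls R) :
    extCount R M N c = if c = ccls R (dsum R N M) then 1 else 0 := by
  unfold extCount
  split_ifs with hc
  · rw [Nat.card_eq_one_iff_unique]
    refine ⟨⟨fun x y => Subtype.ext ((h x.1).trans (h y.1).symm)⟩, ⟨⟨Quot.mk _ (hhSplit M N), ?_⟩⟩⟩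
    rw [hc]; rfl
  · haveI : IsEmpty {x : ExtCl M N // extMid R x = c} := ⟨fun x => hc (by
      rw [← x.2, h x.1]; rfl)⟩
    exact Nat.card_of_isEmpty

lemma hh_KP_H0 (P : R) : IsZero (H0 R (KP R P)) := by
  refine (ShortComplex.exact_iff_isZero_homology _).1 ?_
  refine (ShortComplex.exact_iff_epi _ rfl).2 ?_
  exact inferInstanceAs (Epi (𝟙 P))

lemma hh_KP_H1 (P : R) : IsZero (H1 R (KP R P)) := by
  refine (ShortComplex.exact_iff_isZero_homology _).1 ?_
  refine (ShortComplex.exact_iff_mono _ rfl).2 ?_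
  exact inferInstanceAs (Mono (𝟙 P))

lemma hh_card_left (P : R) (M : Z2Cx R) : Nat.card (Hcx R (KP R P) ⟶ Hcx R M) = 1 := by
  rw [Nat.card_eq_one_iff_unique]
  exact ⟨⟨fun f g => Hom.ext ((hh_KP_H0 P).eq_of_src _ _) ((hh_KP_H1 P).eq_of_src _ _)⟩,
    ⟨⟨0, 0, by simp, by simp⟩⟩⟩

lemma hh_card_right (P : R) (M : Z2Cx R) : Nat.card (Hcx R M ⟶ Hcx R (KP R P)) = 1 := by
  rw [Nat.card_eq_one_iff_unique]
  exact ⟨⟨fun f g => Hom.ext ((hh_KP_H0 P).eq_of_tgt _ _) ((hh_KP_H1 P).eq_of_tgt _ _)⟩,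
    ⟨⟨0, 0, by simp, by simp⟩⟩⟩

lemma hh_ses (S : ShortComplex R) (h : S.ShortExact) :
    K0.cls R S.X₂ = K0.cls R S.X₁ + K0.cls R S.X₃ := by
  have h1 : (QuotientAddGroup.mk (FreeAbelianGroup.of S.X₂ - FreeAbelianGroup.of S.X₁ -
      FreeAbelianGroup.of S.X₃) : K0 R) = 0 :=
    (QuotientAddGroup.eq_zero_iff _).2 (AddSubgroup.subset_closure ⟨S, h, rfl⟩)
  have h2 : K0.cls R S.X₂ - K0.cls R S.X₁ - K0.cls R S.X₃ = 0 := h1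
  rw [sub_sub, sub_eq_zero] at h2
  exact h2

lemma hh_biprod (X Y : R) : K0.cls R (X ⊞ Y) = K0.cls R X + K0.cls R Y :=
  hh_ses _ (ShortComplex.Splitting.ofHasBinaryBiproduct X Y).shortExact

lemma hh_zero (Z : R) (hZ : IsZero Z) : K0.cls R Z = 0 := by
  have h : (ShortComplex.mk (0 : Z ⟶ Z) (0 : Z ⟶ Z) (by simp)).ShortExact :=
    { exact := ShortComplex.exact_of_isZero_X₂ _ hZ
      mono_f := ⟨fun _ _ _ => hZ.eq_of_tgt _ _⟩
      epi_g := ⟨fun _ _ _ => hZ.eq_of_src _ _⟩ }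
  have := hh_ses _ h
  simpa using this

lemma hh_iso {X Y : R} (e : X ≅ Y) : K0.cls R X = K0.cls R Y := by
  obtain ⟨Z, hZ⟩ : ∃ Z : R, IsZero Z := ⟨_, isZero_zero R⟩
  have h : (ShortComplex.mk e.hom (0 : Y ⟶ Z) (by simp)).ShortExact :=
    { exact := (ShortComplex.exact_iff_epi _ rfl).2 (inferInstanceAs (Epi e.hom))
      mono_f := inferInstanceAs (Mono e.hom)
      epi_g := ⟨fun _ _ _ => hZ.eq_of_src _ _⟩ }
  have := hh_ses _ h
  simpa [hh_zero _ hZ] using this.symm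

lemma hh_dec (dd : DecData R) (P : R) (hP : Projective P) :
    dd.cplus (KP R P) = K0.cls R P ∧ dd.cminus (KP R P) = 0 := by
  obtain ⟨A, B, A', B', f, g, -, -, -, -, hf, hg, ⟨φ⟩, h1, h2⟩ := dd.spec (KP R P) hP hP
  have a0 : Hom.f0 φ.inv ≫ Hom.f0 φ.hom = 𝟙 _ := congrArg Hom.f0 φ.inv_hom_id
  have a1 : Hom.f1 φ.inv ≫ Hom.f1 φ.hom = 𝟙 _ := congrArg Hom.f1 φ.inv_hom_id
  have b1 : Hom.f1 φ.hom ≫ Hom.f1 φ.inv = 𝟙 _ := congrArg Hom.f1 φ.hom_inv_id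
  have c0 := hh_comm0 φ.inv
  have c1 : _ = Hom.f1 φ.inv := (hh_comm1 φ.inv).trans (Category.comp_id _)
  -- `g = 0`
  have hd0 : (dsum R (Cf R f) (dagger R (Cf R g))).d0 = 0 := by
    have : (dsum R (Cf R f) (dagger R (Cf R g))).d0 ≫ Hom.f1 φ.inv = 0 :=
      c0.trans comp_zero
    calc _ = (dsum R (Cf R f) (dagger R (Cf R g))).d0 ≫ Hom.f1 φ.inv ≫ Hom.f1 φ.hom := by
            rw [a1, Category.comp_id]
      _ = 0 := by rw [← Category.assoc, this, zero_comp]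
  have hg0 : g = 0 := by
    have h : biprod.map (0 : B ⟶ A) (-g) = 0 := hd0
    have : biprod.inr ≫ biprod.map (0 : B ⟶ A) (-g) ≫ biprod.snd = 0 := by
      rw [h]; simp
    simpa using this
  have hA' : IsZero A' := by
    subst hg0
    rw [IsZero.iff_id_eq_zero, ← cancel_mono (0 : A' ⟶ B')]
    simp
  have hB' : IsZero B' := by
    have e : (biprod.inr : B' ⟶ A ⊞ B') ≫ biprod.map f (-(0 : B' ⟶ A')) = 0 := by simp
    have e1 : (biprod.inr : B' ⟶ A ⊞ B') ≫ Hom.f1 φ.inv = 0 := by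
      rw [← c1]
      exact (Category.assoc _ _ _).symm.trans ((congrArg (· ≫ _) e).trans zero_comp)
    exact hh_inr _ _ a1 e1
  refine ⟨?_, by rw [h2, hh_zero _ hA']⟩
  have e : P ≅ A ⊞ B' := ⟨Hom.f1 φ.hom, Hom.f1 φ.inv, b1, a1⟩
  rw [h1, hh_iso e, hh_biprod, hh_zero _ hB', add_zero]

lemma hh_pow (v q : ℝ) (hv0 : 0 < v) (hv2 : v ^ 2 = q) (a b c : ℚ) (h : a = c + 2 * b) :
    v ^ (a : ℝ) * ((1 : ℕ) : ℝ) / (q ^ (b : ℝ) * ((1 : ℕ) : ℝ)) = v ^ (c : ℝ) := by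
  have : q ^ (b : ℝ) = v ^ (2 * b : ℝ) := by
    rw [Real.rpow_mul hv0.le, ← hv2]; norm_num
  rw [this, h]
  push_cast
  rw [mul_one, mul_one, Real.rpow_add hv0]
  field_simp

end Helpers

theorem stmt10 (hH : Hereditary k R) (hc : CondC R) (hd : CondD R) (he : CondE R)
    (v : ℝ) (hv0 : 0 < v) (hv2 : v ^ 2 = (Fintype.card k : ℝ))
    (ed : EulerData k R) (dd : DecData R)
    (P : R) (hP : Projective P) (M : Z2Cx R) (hM : FinCx R M) :
    (∀ c : CxCls R,
      hallCoeff v ed dd (KP R P) M c =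
        if c = ccls R (dsum R (KP R P) M) then
          ((v ^ ((ed.eQ (K0.cls R P) (clsOf R M) : ℚ) : ℝ) : ℝ) : ℂ)
        else 0) ∧
    (∀ c : CxCls R,
      hallCoeff v ed dd M (KP R P) c =
        if c = ccls R (dsum R (KP R P) M) then
          ((v ^ ((-(ed.eQ (clsOf R M) (K0.cls R P)) : ℚ) : ℝ) : ℝ) : ℂ)
        else 0) := by
  obtain ⟨hp, hm⟩ := hh_dec dd P hP
  constructor
  · intro c
    have hcount := hh_count (KP R P) M (fun x => by
      induction x using Quot.ind with
      | mk s => exact (Quot.sound (hh_left P hP M s)).symm) c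
    rw [hh_braid] at hcount
    unfold hallCoeff hVal
    rw [hcount, hh_card_left]
    split_ifs with h
    · refine congrArg _ (hh_pow v _ hv0 hv2 _ _ _ ?_)
      simp only [mu, hp, hm, clsOf]
      change ed.eQ (K0.cls R P) _ + ed.eQ (K0.cls R P) _ = _ + 2 * (
        ed.eQ (K0.cls R P - 0) _ + _ + _ + ed.eQ (K0.cls R P - K0.cls R P) _)
      simp only [map_sub, map_zero, sub_zero, sub_self, AddMonoidHom.zero_apply]
      ring
    · simp
  · intro c
    have hcount := hh_count M (KP R P) (fun x => by
      induction x using Quot.ind with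
      | mk s => exact Quot.sound (hh_right P M hM.1 s)) c
    unfold hallCoeff hVal
    rw [hcount, hh_card_right]
    split_ifs with h
    · refine congrArg _ (hh_pow v _ hv0 hv2 _ _ _ ?_)
      simp only [mu, hp, hm, clsOf]
      change ed.eQ _ (K0.cls R P) + ed.eQ _ (K0.cls R P) = _ + 2 * (
        _ + ed.eQ _ (K0.cls R P - K0.cls R P) + ed.eQ _ (K0.cls R P - 0) + _)
      simp only [map_sub, map_zero, sub_zero, sub_self, AddMonoidHom.sub_apply]
      ring
    · simp

end
end

section
/- The localized Hall algebra DH(R) is free as a right DH₀(R)-module, with basis consisting of the elements E_{A,B} indexed by all pairs of isomorphism classes of objects A, B ∈ A. -/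
set_option linter.unusedSectionVars false

open CategoryTheory CategoryTheory.Limits Opposite

noncomputable section

universe u

variable (k : Type) [Field k] [Fintype k]
variable (R : Type u) [SmallCategory R] [Abelian R] [Linear k R] [EnoughProjectives R]

attribute [local instance] Classical.propDecidable

variable {k R}

variable (k R)

/-- Objects of `C_fin(P)`. -/
def FCx := {M : Z2Cx R // FinCx R M}

/-- Isomorphism classes of objects of `C_fin(P)`. -/
def FCls := Quot (fun M N : FCx R => Nonempty (M.1 ≅ N.1))

/-- The isomorphism class of an object of `C_fin(P)`. -/
def fcls (M : FCx R) : FCls R := Quot.mk _ M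

/-- Comparison of isomorphism classes in `C_fin(P)` with isomorphism classes of
arbitrary complexes. -/
def fc2c : FCls R → CxCls R :=
  Quot.lift (fun M => ccls R M.1) (fun _ _ h => Quot.sound h)

/-- The symmetrized Euler form `(α,β) = ⟨α,β⟩ + ⟨β,α⟩`. -/
def sForm (ed : EulerData k R) (a b : K0 R) : ℚ := ed.eQ a b + ed.eQ b a

open ZeroObject in
/-- The zero complex. -/
def zeroCx : Z2Cx R := ⟨0, 0, 0, 0, by simp, by simp⟩

/-- All the data constituting the localized Hall algebra `DH(R)`:
the Hall algebra `H(C_fin(P))` (a free `ℂ`-module on the isomorphism classes of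
`C_fin(P)`, with the Hall multiplication `mulH` determined by the structure constants
`hallCoeff`), and its localization `D` at the classes of acyclic complexes, together
with the elements `K_α ⋆ K_β^† = KK (α, β)` and the canonical map `loc`.  The axioms
express that `D` is precisely the localization of `H(C_fin(P))` at the classes of
acyclic complexes, with the `ℂ[K(R) × K(R)]`-bimodule structure of the paper. -/
structure DHSetting where
  v : ℝ
  v_pos : 0 < v
  v_sq : v ^ 2 = (Fintype.card k : ℝ)
  ed : EulerData k R
  dd : DecData R
  /-- the Hall multiplication on `H(C_fin(P))` -/
  mulH : ((FCls R) →₀ ℂ) →ₗ[ℂ] ((FCls R) →₀ ℂ) →ₗ[ℂ] ((FCls R) →₀ ℂ)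
  mulH_single : ∀ (M N : FCx R) (c : FCls R),
    (mulH (Finsupp.single (fcls R M) 1) (Finsupp.single (fcls R N) 1)) c
      = hallCoeff v ed dd M.1 N.1 (fc2c R c)
  /-- the carrier of the localized Hall algebra `DH(R)` -/
  D : Type u
  [grp : AddCommGroup D]
  [mod : Module ℂ D]
  /-- the multiplication `⋆` of `DH(R)` -/
  mulD : D →ₗ[ℂ] D →ₗ[ℂ] D
  one : D
  one_mul : ∀ d, mulD one d = d
  mul_one : ∀ d, mulD d one = d
  /-- the canonical map `H(C_fin(P)) → DH(R)` -/
  loc : ((FCls R) →₀ ℂ) →ₗ[ℂ] D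
  loc_one : ∀ h : FinCx R (zeroCx R),
    loc (Finsupp.single (fcls R ⟨zeroCx R, h⟩) 1) = one
  loc_mul : ∀ x y, mulD (loc x) (loc y) = loc (mulH x y)
  /-- the elements `K_α ⋆ K_β^†` -/
  KK : K0 R × K0 R → D
  KK_zero : KK 0 = one
  KK_mul : ∀ a b, mulD (KK a) (KK b) = KK (a + b)
  KK_P : ∀ (P : R), Projective P → ∀ h : FinCx R (Z2Cx.KP R P),
    loc (Finsupp.single (fcls R ⟨Z2Cx.KP R P, h⟩) 1) = KK (K0.cls R P, 0)
  KK_Pd : ∀ (P : R), Projective P → ∀ h : FinCx R (Z2Cx.dagger R (Z2Cx.KP R P)),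
    loc (Finsupp.single (fcls R ⟨Z2Cx.dagger R (Z2Cx.KP R P), h⟩) 1) = KK (0, K0.cls R P)
  /-- the bimodule rule `(K_α ⋆ K_β^†) ⋆ [M•] = v^{(α-β,[M•])} [M•] ⋆ (K_α ⋆ K_β^†)` -/
  comm_rule : ∀ (a b : K0 R) (M : FCx R),
    mulD (KK (a, b)) (loc (Finsupp.single (fcls R M) 1)) =
      (((v ^ ((sForm k R ed (a - b) (clsOf R M.1) : ℚ) : ℝ) : ℝ) : ℂ)) •
        mulD (loc (Finsupp.single (fcls R M) 1)) (KK (a, b))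
  /-- multiplication of elements in standard form is induced by the Hall multiplication -/
  mul_general : ∀ (x : (FCls R) →₀ ℂ) (M : FCx R) (a b a' b' : K0 R),
    mulD (mulD (loc x) (KK (a, b))) (mulD (loc (Finsupp.single (fcls R M) 1)) (KK (a', b'))) =
      (((v ^ ((sForm k R ed (a - b) (clsOf R M.1) : ℚ) : ℝ) : ℝ) : ℂ)) •
        mulD (loc (mulH x (Finsupp.single (fcls R M) 1))) (KK (a + a', b + b'))
  /-- every element of the localization has the standard form `x ⋆ K_α ⋆ K_β^†` -/
  span : ∀ d : D, ∃ (x : (FCls R) →₀ ℂ) (a b : K0 R), d = mulD (loc x) (KK (a, b))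
  /-- the kernel of the localization map is exactly the torsion with respect to the
  classes of acyclic complexes -/
  loc_ker : ∀ x, loc x = 0 ↔ ∃ (K : Z2Cx R) (h : FinCx R K),
    Z2Cx.Acyclic R K ∧ mulH x (Finsupp.single (fcls R ⟨K, h⟩) 1) = 0

attribute [instance] DHSetting.grp DHSetting.mod

variable {k R}

/-- The element `E_{M•} = v^{⟨[M₁⁺]-[M₀⁻],[M•]⟩} K_{-[M₁⁺]} ⋆ K^†_{-[M₀⁻]} ⋆ [M•]`
of the localized Hall algebra. -/
def Eelt (S : DHSetting k R) (M : Z2Cx R) (h : FinCx R M) : S.D :=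
  (((S.v ^ ((S.ed.eQ (S.dd.cplus M - S.dd.cminus M) (clsOf R M) : ℚ) : ℝ) : ℝ) : ℂ)) •
    S.mulD (S.KK (-(S.dd.cplus M), -(S.dd.cminus M)))
      (S.loc (Finsupp.single (fcls R ⟨M, h⟩) 1))

variable (R)

/-- Isomorphism classes of objects of the subcategory `A`. -/
def IsoA := Quot (fun A B : {A : R // IsFinHom R A} => Nonempty (A.1 ≅ B.1))

variable {R}

namespace S11

open Z2Cx

lemma bmap_comp {A B C A' B' C' : R} (f : A ⟶ B) (g : B ⟶ C) (f' : A' ⟶ B') (g' : B' ⟶ C') :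
    biprod.map (f ≫ g) (f' ≫ g') = biprod.map f f' ≫ biprod.map g g' := by
  ext <;> simp

/-! ### Isomorphisms of complexes -/

def mkIso {M N : Z2Cx R} (e0 : M.X0 ≅ N.X0) (e1 : M.X1 ≅ N.X1)
    (c0 : M.d0 ≫ e1.hom = e0.hom ≫ N.d0) (c1 : M.d1 ≫ e0.hom = e1.hom ≫ N.d1) : M ≅ N where
  hom := Z2Cx.Hom.mk e0.hom e1.hom c0 c1
  inv := Z2Cx.Hom.mk e0.inv e1.inv
    (by rw [Iso.comp_inv_eq, Category.assoc, c0, Iso.inv_hom_id_assoc])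
    (by rw [Iso.comp_inv_eq, Category.assoc, c1, Iso.inv_hom_id_assoc])
  hom_inv_id := by apply Z2Cx.Hom.ext <;> simp
  inv_hom_id := by apply Z2Cx.Hom.ext <;> simp

def iso0 {M N : Z2Cx R} (e : M ≅ N) : M.X0 ≅ N.X0 where
  hom := Hom.f0 e.hom
  inv := Hom.f0 e.inv
  hom_inv_id := by rw [← comp_f0, e.hom_inv_id]; rfl
  inv_hom_id := by rw [← comp_f0, e.inv_hom_id]; rfl

def iso1 {M N : Z2Cx R} (e : M ≅ N) : M.X1 ≅ N.X1 where
  hom := Hom.f1 e.hom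
  inv := Hom.f1 e.inv
  hom_inv_id := by rw [← comp_f1, e.hom_inv_id]; rfl
  inv_hom_id := by rw [← comp_f1, e.inv_hom_id]; rfl

lemma iso_comm0 {M N : Z2Cx R} (e : M ≅ N) : M.d0 ≫ (iso1 e).hom = (iso0 e).hom ≫ N.d0 :=
  Hom.comm0 e.hom

lemma iso_comm1 {M N : Z2Cx R} (e : M ≅ N) : M.d1 ≫ (iso0 e).hom = (iso1 e).hom ≫ N.d1 :=
  Hom.comm1 e.hom

lemma iso_comm0_inv {M N : Z2Cx R} (e : M ≅ N) : N.d0 ≫ (iso1 e).inv = (iso0 e).inv ≫ M.d0 :=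
  Hom.comm0 e.inv

lemma iso_comm1_inv {M N : Z2Cx R} (e : M ≅ N) : N.d1 ≫ (iso0 e).inv = (iso1 e).inv ≫ M.d1 :=
  Hom.comm1 e.inv

lemma bmap_sq {A B A' B' C D C' D' : R} (a : A ≅ A') (b : B ≅ B') (c : C ≅ C') (d : D ≅ D')
    (f : A ⟶ C) (f' : A' ⟶ C') (g : B ⟶ D) (g' : B' ⟶ D')
    (h : f ≫ c.hom = a.hom ≫ f') (h' : g ≫ d.hom = b.hom ≫ g') :
    biprod.map f g ≫ (biprod.mapIso c d).hom = (biprod.mapIso a b).hom ≫ biprod.map f' g' := by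
  rw [biprod.mapIso_hom, biprod.mapIso_hom, ← bmap_comp, ← bmap_comp, h, h']

def dsumIso {M M' N N' : Z2Cx R} (a : M ≅ M') (b : N ≅ N') : dsum R M N ≅ dsum R M' N' :=
  mkIso (biprod.mapIso (iso0 a) (iso0 b)) (biprod.mapIso (iso1 a) (iso1 b))
    (bmap_sq _ _ _ _ _ _ _ _ (iso_comm0 a) (iso_comm0 b))
    (bmap_sq _ _ _ _ _ _ _ _ (iso_comm1 a) (iso_comm1 b))

lemma neg_sq {A B A' B' : R} (f : A ⟶ B) (f' : A' ⟶ B') (a : A ⟶ A') (b : B ⟶ B')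
    (h : f ≫ b = a ≫ f') : (-f) ≫ b = a ≫ (-f') := by simp [h]

def daggerIso {M N : Z2Cx R} (a : M ≅ N) : dagger R M ≅ dagger R N :=
  mkIso (iso1 a) (iso0 a) (neg_sq _ _ _ _ (iso_comm1 a)) (neg_sq _ _ _ _ (iso_comm0 a))

lemma neg_bmap {A B A' B' : R} (f : A ⟶ B) (f' : A' ⟶ B') :
    (-biprod.map f f') ≫ 𝟙 _ = 𝟙 _ ≫ biprod.map (-f) (-f') := by ext <;> simp

def daggerDsum (M N : Z2Cx R) : dagger R (dsum R M N) ≅ dsum R (dagger R M) (dagger R N) :=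
  mkIso (Iso.refl _) (Iso.refl _) (neg_bmap _ _) (neg_bmap _ _)

def bsh (A B C D : R) : (A ⊞ B) ⊞ (C ⊞ D) ⟶ (A ⊞ C) ⊞ (B ⊞ D) :=
  biprod.lift (biprod.map biprod.fst biprod.fst) (biprod.map biprod.snd biprod.snd)

lemma bsh_bsh (A B C D : R) : bsh A B C D ≫ bsh A C B D = 𝟙 _ := by
  unfold bsh; ext <;> simp

def bshIso (A B C D : R) : (A ⊞ B) ⊞ (C ⊞ D) ≅ (A ⊞ C) ⊞ (B ⊞ D) :=
  ⟨bsh _ _ _ _, bsh _ _ _ _, bsh_bsh _ _ _ _, bsh_bsh _ _ _ _⟩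

lemma bsh_nat {A B C D A' B' C' D' : R} (a : A ⟶ A') (b : B ⟶ B') (c : C ⟶ C') (d : D ⟶ D') :
    biprod.map (biprod.map a b) (biprod.map c d) ≫ bsh _ _ _ _ =
      bsh _ _ _ _ ≫ biprod.map (biprod.map a c) (biprod.map b d) := by
  unfold bsh; ext <;> simp

def shuffle (M N K L : Z2Cx R) :
    dsum R (dsum R M N) (dsum R K L) ≅ dsum R (dsum R M K) (dsum R N L) :=
  mkIso (bshIso _ _ _ _) (bshIso _ _ _ _) (bsh_nat _ _ _ _) (bsh_nat _ _ _ _)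

lemma braid_sq {A B A' B' : R} (f : A ⟶ B) (f' : A' ⟶ B') :
    biprod.map f f' ≫ (biprod.braiding B B').hom =
      (biprod.braiding A A').hom ≫ biprod.map f' f := by
  ext <;> simp

def dsumComm (M N : Z2Cx R) : dsum R M N ≅ dsum R N M :=
  mkIso (biprod.braiding _ _) (biprod.braiding _ _) (braid_sq _ _) (braid_sq _ _)

/-! ### Contractible complexes -/

def Contr (K : Z2Cx R) : Prop :=
  ∃ (h0 : K.X0 ⟶ K.X1) (h1 : K.X1 ⟶ K.X0),
    K.d0 ≫ h1 + h0 ≫ K.d1 = 𝟙 _ ∧ K.d1 ≫ h0 + h1 ≫ K.d0 = 𝟙 _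

lemma contr_of_iso {K L : Z2Cx R} (e : K ≅ L) (h : Contr L) : Contr K := by
  obtain ⟨h0, h1, e0, e1⟩ := h
  refine ⟨(iso0 e).hom ≫ h0 ≫ (iso1 e).inv, (iso1 e).hom ≫ h1 ≫ (iso0 e).inv, ?_, ?_⟩
  · rw [← Category.assoc, iso_comm0, Category.assoc, Category.assoc, Category.assoc,
      ← iso_comm1_inv, ← Preadditive.comp_add, ← Category.assoc, ← Category.assoc,
      ← Preadditive.add_comp, e0]
    simp
  · rw [← Category.assoc, iso_comm1, Category.assoc, Category.assoc, Category.assoc,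
      ← iso_comm0_inv, ← Preadditive.comp_add, ← Category.assoc, ← Category.assoc,
      ← Preadditive.add_comp, e1]
    simp

lemma bmap_contr {A B A' B' : R} (d : A ⟶ B) (h1 : B ⟶ A) (h0 : A ⟶ B) (d1 : B ⟶ A)
    (d' : A' ⟶ B') (h1' : B' ⟶ A') (h0' : A' ⟶ B') (d1' : B' ⟶ A')
    (e : d ≫ h1 + h0 ≫ d1 = 𝟙 _) (e' : d' ≫ h1' + h0' ≫ d1' = 𝟙 _) :
    biprod.map d d' ≫ biprod.map h1 h1' + biprod.map h0 h0' ≫ biprod.map d1 d1' = 𝟙 _ := by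
  rw [← bmap_comp, ← bmap_comp]
  ext
  · simp [e]
  · simp
  · simp
  · simp [e']

lemma contr_dsum {K L : Z2Cx R} (hK : Contr K) (hL : Contr L) : Contr (dsum R K L) := by
  obtain ⟨h0, h1, e0, e1⟩ := hK
  obtain ⟨g0, g1, f0, f1⟩ := hL
  exact ⟨biprod.map h0 g0, biprod.map h1 g1, bmap_contr _ _ _ _ _ _ _ _ e0 f0,
    bmap_contr _ _ _ _ _ _ _ _ e1 f1⟩

lemma contr_mk {X0 X1 : R} (d0 : X0 ⟶ X1) (d1 : X1 ⟶ X0) (d01 d10) (h0 : X0 ⟶ X1) (h1 : X1 ⟶ X0)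
    (e0 : d0 ≫ h1 + h0 ≫ d1 = 𝟙 _) (e1 : d1 ≫ h0 + h1 ≫ d0 = 𝟙 _) :
    Contr (⟨X0, X1, d0, d1, d01, d10⟩ : Z2Cx R) := ⟨h0, h1, e0, e1⟩

lemma contr_Cf {P Q : R} (f : P ⟶ Q) (g : Q ⟶ P) (h1 : f ≫ g = 𝟙 _) (h2 : g ≫ f = 𝟙 _) :
    Contr (Cf R f) :=
  contr_mk _ _ _ _ g 0 (by simp [h2]) (by simp [h1])

lemma contr_dagger {K : Z2Cx R} (h : Contr K) : Contr (dagger R K) := by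
  obtain ⟨h0, h1, e0, e1⟩ := h
  exact contr_mk _ _ _ _ (-h1) (-h0) (by simp [e1]) (by simp [e0])

lemma contr_KP (P : R) : Contr (KP R P) := contr_mk _ _ _ _ (𝟙 _) 0 (by simp) (by simp)

lemma exact0 {K : Z2Cx R} (h : Acyclic R K) : (ShortComplex.mk K.d1 K.d0 K.d10).Exact :=
  (ShortComplex.exact_iff_isZero_homology _).2 h.1

lemma exact1 {K : Z2Cx R} (h : Acyclic R K) : (ShortComplex.mk K.d0 K.d1 K.d01).Exact :=
  (ShortComplex.exact_iff_isZero_homology _).2 h.2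

lemma isZero_H0 {K : Z2Cx R} (h : Contr K) : IsZero (H0 R K) := by
  obtain ⟨h0, h1, e0, e1⟩ := h
  apply (ShortComplex.exact_iff_isZero_homology _).1
  rw [ShortComplex.exact_iff_exact_up_to_refinements]
  intro A x hx
  refine ⟨A, 𝟙 _, inferInstance, x ≫ h0, ?_⟩
  dsimp at hx ⊢
  have := congrArg (fun t => x ≫ t) e0
  simp only [Preadditive.comp_add, reassoc_of% hx, zero_comp, zero_add, Category.comp_id] at this
  simp [this]

lemma isZero_H1 {K : Z2Cx R} (h : Contr K) : IsZero (H1 R K) := by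
  obtain ⟨h0, h1, e0, e1⟩ := h
  apply (ShortComplex.exact_iff_isZero_homology _).1
  rw [ShortComplex.exact_iff_exact_up_to_refinements]
  intro A x hx
  refine ⟨A, 𝟙 _, inferInstance, x ≫ h1, ?_⟩
  dsimp at hx ⊢
  have := congrArg (fun t => x ≫ t) e1
  simp only [Preadditive.comp_add, reassoc_of% hx, zero_comp, zero_add, Category.comp_id] at this
  simp [this]

lemma contr_of_acyclic (dd : DecData R) {K : Z2Cx R} (p0 : Projective K.X0)
    (p1 : Projective K.X1) (h : Acyclic R K) : Contr K := by
  obtain ⟨P, Q, P', Q', f, g, hP, hQ, hP', hQ', mf, mg, ⟨e⟩, -, -⟩ := dd.spec K p0 p1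
  have E0 := exact0 h
  have E1 := exact1 h
  obtain ⟨a0, a1, c0, c1, i0, i1⟩ : ∃ (a0 : K.X0 ≅ Q ⊞ P') (a1 : K.X1 ≅ P ⊞ Q'),
      K.d0 ≫ a1.hom = a0.hom ≫ biprod.map 0 (-g) ∧
      K.d1 ≫ a0.hom = a1.hom ≫ biprod.map f (-0) ∧
      biprod.map 0 (-g) ≫ a1.inv = a0.inv ≫ K.d0 ∧
      biprod.map f (-0) ≫ a0.inv = a1.inv ≫ K.d1 :=
    ⟨iso0 e, iso1 e, iso_comm0 e, iso_comm1 e, iso_comm0_inv e, iso_comm1_inv e⟩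
  have key0 : ∃ t : Q ⟶ P, t ≫ f = 𝟙 Q := by
    obtain ⟨t, ht⟩ : ∃ t : Q ⟶ K.X1, t ≫ K.d1 = biprod.inl ≫ a0.inv :=
      ⟨_, E0.liftFromProjective_comp (biprod.inl ≫ a0.inv) (by
        dsimp only
        rw [Category.assoc, ← i0]; simp)⟩
    refine ⟨t ≫ a1.hom ≫ biprod.fst, ?_⟩
    have h4 : t ≫ a1.hom ≫ biprod.map f (-0) ≫ (biprod.fst : Q ⊞ P' ⟶ Q) = 𝟙 Q := by
      rw [← reassoc_of% c1, reassoc_of% ht]; simp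
    simpa using h4
  have key1 : ∃ t : Q' ⟶ P', t ≫ g = 𝟙 Q' := by
    obtain ⟨t, ht⟩ : ∃ t : Q' ⟶ K.X0, t ≫ K.d0 = biprod.inr ≫ a1.inv :=
      ⟨_, E1.liftFromProjective_comp (biprod.inr ≫ a1.inv) (by
        dsimp only
        rw [Category.assoc, ← i1]; simp)⟩
    refine ⟨-(t ≫ a0.hom ≫ biprod.snd), ?_⟩
    have h4 : t ≫ a0.hom ≫ biprod.map 0 (-g) ≫ (biprod.snd : P ⊞ Q' ⟶ Q') = 𝟙 Q' := by
      rw [← reassoc_of% c0, reassoc_of% ht]; simp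
    simpa using h4
  obtain ⟨t, ht⟩ := key0
  obtain ⟨t', ht'⟩ := key1
  refine contr_of_iso e (contr_dsum (contr_Cf f t ?_ ht) (contr_dagger (contr_Cf g t' ?_ ht')))
  · rw [← cancel_mono f]; simp [ht]
  · rw [← cancel_mono g]; simp [ht']
/-! ### Extensions by contractible complexes -/

lemma triv_ses (A B : R) : (ShortComplex.mk (biprod.inr : B ⟶ A ⊞ B) (biprod.fst : A ⊞ B ⟶ A)
    biprod.inr_fst).ShortExact :=
  ShortComplex.Splitting.shortExact
    { r := biprod.snd, s := biprod.inl, f_r := by simp, s_g := by simp,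
      id := by dsimp only; rw [add_comm]; exact biprod.total }

def trivExt (M K : Z2Cx R) : ExtSES M K where
  E := dsum R M K
  i := Z2Cx.Hom.mk (biprod.inr : K.X0 ⟶ M.X0 ⊞ K.X0) (biprod.inr : K.X1 ⟶ M.X1 ⊞ K.X1)
    (biprod.inr_map _ _).symm (biprod.inr_map _ _).symm
  p := Z2Cx.Hom.mk (biprod.fst : M.X0 ⊞ K.X0 ⟶ M.X0) (biprod.fst : M.X1 ⊞ K.X1 ⟶ M.X1)
    (biprod.map_fst _ _) (biprod.map_fst _ _)
  w0 := biprod.inr_fst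
  w1 := biprod.inr_fst
  ex0 := triv_ses _ _
  ex1 := triv_ses _ _

/-- a retraction of a degreewise split inclusion of a contractible complex -/
lemma retr_aux {E0 E1 K0 K1 : R} (D0 : E0 ⟶ E1) (D1 : E1 ⟶ E0) (D01 : D0 ≫ D1 = 0)
    (d0 : K0 ⟶ K1) (d1 : K1 ⟶ K0) (d10 : d1 ≫ d0 = 0)
    (i0 : K0 ⟶ E0) (i1 : K1 ⟶ E1) (c0 : d0 ≫ i1 = i0 ≫ D0)
    (r0 : E0 ⟶ K0) (r1 : E1 ⟶ K1) (hr0 : i0 ≫ r0 = 𝟙 _) (hr1 : i1 ≫ r1 = 𝟙 _)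
    (h0 : K0 ⟶ K1) (h1 : K1 ⟶ K0) (e0 : d0 ≫ h1 + h0 ≫ d1 = 𝟙 _) :
    (D0 ≫ (D1 ≫ r0 ≫ h0 + r1 ≫ h1 ≫ d0) = (D0 ≫ r1 ≫ h1 + r0 ≫ h0 ≫ d1) ≫ d0) ∧
    i0 ≫ (D0 ≫ r1 ≫ h1 + r0 ≫ h0 ≫ d1) = 𝟙 _ := by
  constructor
  · simp [reassoc_of% D01, d10]
  · rw [Preadditive.comp_add, ← reassoc_of% c0, reassoc_of% hr1, reassoc_of% hr0, e0]

lemma lift_iso {A B C : R} (i : A ⟶ B) (p : B ⟶ C) (w : i ≫ p = 0)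
    (h : (ShortComplex.mk i p w).ShortExact) (r : B ⟶ A) (hr : i ≫ r = 𝟙 _) :
    IsIso (biprod.lift p r) := by
  have := h.epi_g
  let s := ShortComplex.Splitting.ofExactOfRetraction _ h.exact r hr h.epi_g
  have h1 : s.s ≫ p = 𝟙 _ := s.s_g
  have h2 : s.s ≫ r = 0 := s.s_r
  have h3 : r ≫ i + p ≫ s.s = 𝟙 _ := s.id
  refine ⟨biprod.desc s.s i, ?_, ?_⟩
  · simp [← h3, add_comm]
  · ext <;> simp [h1, h2, hr, w]

lemma lift_sq {E0 E1 M0 M1 K0 K1 : R} (D : E0 ⟶ E1) (d : M0 ⟶ M1) (d' : K0 ⟶ K1)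
    (p0 : E0 ⟶ M0) (p1 : E1 ⟶ M1) (r0 : E0 ⟶ K0) (r1 : E1 ⟶ K1) (h : D ≫ p1 = p0 ≫ d)
    (h' : D ≫ r1 = r0 ≫ d') : D ≫ biprod.lift p1 r1 = biprod.lift p0 r0 ≫ biprod.map d d' := by
  ext <;> simp [h, h']

lemma inr_eq {E M K : R} (i : K ⟶ E) (p : E ⟶ M) (r : E ⟶ K) (h : i ≫ p = 0) (h' : i ≫ r = 𝟙 _) :
    i ≫ biprod.lift p r = biprod.inr := by
  ext <;> simp [h, h']

lemma ext_triv {M K : Z2Cx R} (p0 : Projective M.X0) (p1 : Projective M.X1) (hK : Contr K)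
    (s : ExtSES M K) : ExtEquiv M K s (trivExt M K) := by
  obtain ⟨h0, h1, e0, e1⟩ := hK
  have s0 := s.ex0.splittingOfProjective
  have s1 := s.ex1.splittingOfProjective
  obtain ⟨q0, k0⟩ := retr_aux s.E.d0 s.E.d1 s.E.d01 K.d0 K.d1 K.d10 (Hom.f0 s.i) (Hom.f1 s.i)
    (Hom.comm0 s.i) s0.r s1.r s0.f_r s1.f_r h0 h1 e0
  obtain ⟨q1, k1⟩ := retr_aux s.E.d1 s.E.d0 s.E.d10 K.d1 K.d0 K.d01 (Hom.f1 s.i) (Hom.f0 s.i)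
    (Hom.comm1 s.i) s1.r s0.r s1.f_r s0.f_r h1 h0 e1
  obtain ⟨ρ0, ρ1, q0, q1, k0, k1⟩ : ∃ (ρ0 : s.E.X0 ⟶ K.X0) (ρ1 : s.E.X1 ⟶ K.X1),
      s.E.d0 ≫ ρ1 = ρ0 ≫ K.d0 ∧ s.E.d1 ≫ ρ0 = ρ1 ≫ K.d1 ∧
      Hom.f0 s.i ≫ ρ0 = 𝟙 _ ∧ Hom.f1 s.i ≫ ρ1 = 𝟙 _ := ⟨_, _, q0, q1, k0, k1⟩
  have i0 := lift_iso _ _ _ s.ex0 ρ0 k0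
  have i1 := lift_iso _ _ _ s.ex1 ρ1 k1
  refine ⟨mkIso (@asIso _ _ _ _ _ i0) (@asIso _ _ _ _ _ i1)
    (lift_sq _ _ _ _ _ _ _ (Hom.comm0 s.p) q0) (lift_sq _ _ _ _ _ _ _ (Hom.comm1 s.p) q1), ?_, ?_⟩
  · apply Z2Cx.Hom.ext
    · exact inr_eq _ _ _ s.w0 k0
    · exact inr_eq _ _ _ s.w1 k1
  · apply Z2Cx.Hom.ext
    · exact biprod.lift_fst _ _
    · exact biprod.lift_fst _ _

lemma unique_ext {M K : Z2Cx R} (p0 : Projective M.X0) (p1 : Projective M.X1) (hK : Contr K)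
    (x : ExtCl M K) : x = Quot.mk _ (trivExt M K) := by
  obtain ⟨s, rfl⟩ := Quot.exists_rep x
  exact Quot.sound (ext_triv p0 p1 hK s)

lemma extCount_self {M K : Z2Cx R} (p0 : Projective M.X0) (p1 : Projective M.X1) (hK : Contr K) :
    extCount R M K (ccls R (dsum R M K)) = 1 := by
  unfold extCount
  rw [Nat.card_eq_one_iff_unique]
  refine ⟨⟨fun a b => Subtype.ext ?_⟩, ⟨⟨Quot.mk _ (trivExt M K), rfl⟩⟩⟩
  rw [unique_ext p0 p1 hK a.1, unique_ext p0 p1 hK b.1]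

lemma extCount_ne {M K : Z2Cx R} (p0 : Projective M.X0) (p1 : Projective M.X1) (hK : Contr K)
    (c : CxCls R) (hc : c ≠ ccls R (dsum R M K)) :
    extCount R M K c = 0 := by
  unfold extCount
  have : IsEmpty {x : Z2Cx.ExtCl M K // extMid R x = c} := ⟨fun a => hc (by
    rw [← a.2, unique_ext p0 p1 hK a.1]; rfl)⟩
  exact Nat.card_of_isEmpty

lemma ccls_eq {M N : Z2Cx R} (h : ccls R M = ccls R N) : Nonempty (M ≅ N) := by
  have hE : Equivalence (cxRel R) :=
    ⟨fun M => ⟨Iso.refl M⟩, fun ⟨e⟩ => ⟨e.symm⟩, fun ⟨e⟩ ⟨f⟩ => ⟨e ≪≫ f⟩⟩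
  exact (hE.quot_mk_eq_iff M N).1 h

lemma fcls_eq {M N : FCx R} (e : M.1 ≅ N.1) : fcls R M = fcls R N := Quot.sound ⟨e⟩

lemma fcls_iso {M N : FCx R} (h : fcls R M = fcls R N) : Nonempty (M.1 ≅ N.1) :=
  ccls_eq (congrArg (fc2c R) h)

lemma fc2c_inj : Function.Injective (fc2c R) := by
  intro a b h
  obtain ⟨M, rfl⟩ := Quot.exists_rep a
  obtain ⟨N, rfl⟩ := Quot.exists_rep b
  obtain ⟨e⟩ := ccls_eq h
  exact fcls_eq e

/-! ### Homology -/

def H0iso {M N : Z2Cx R} (e : M ≅ N) : H0 R M ≅ H0 R N :=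
  ShortComplex.homologyMapIso (ShortComplex.isoMk (iso1 e) (iso0 e) (iso1 e)
    (iso_comm1 e).symm (iso_comm0 e).symm)

def H1iso {M N : Z2Cx R} (e : M ≅ N) : H1 R M ≅ H1 R N :=
  ShortComplex.homologyMapIso (ShortComplex.isoMk (iso0 e) (iso1 e) (iso0 e)
    (iso_comm0 e).symm (iso_comm1 e).symm)

/-- homology of a direct sum when the second summand is exact -/
lemma homology_biprod {A B C A' B' C' : R} (f : A ⟶ B) (g : B ⟶ C) (w : f ≫ g = 0)
    (f' : A' ⟶ B') (g' : B' ⟶ C') (w' : f' ≫ g' = 0) (w'' : biprod.map f f' ≫ biprod.map g g' = 0)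
    (hz : IsZero (ShortComplex.mk f' g' w').homology) :
    Nonempty ((ShortComplex.mk (biprod.map f f') (biprod.map g g') w'').homology ≅
      (ShortComplex.mk f g w).homology) := by
  let S := ShortComplex.mk f g w
  let S' := ShortComplex.mk f' g' w'
  let T := ShortComplex.mk (biprod.map f f') (biprod.map g g') w''
  let a : T ⟶ S := ⟨biprod.fst, biprod.fst, biprod.fst, by simp [T, S], by simp [T, S]⟩
  let b : S ⟶ T := ⟨biprod.inl, biprod.inl, biprod.inl, by simp [T, S], by simp [T, S]⟩
  let a' : T ⟶ S' := ⟨biprod.snd, biprod.snd, biprod.snd, by simp [T, S'], by simp [T, S']⟩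
  let b' : S' ⟶ T := ⟨biprod.inr, biprod.inr, biprod.inr, by simp [T, S'], by simp [T, S']⟩
  have h1 : b ≫ a = 𝟙 S := by
    ext <;> exact biprod.inl_fst
  have h2 : a ≫ b + a' ≫ b' = 𝟙 T := by
    apply ShortComplex.hom_ext
    · exact biprod.total
    · exact biprod.total
    · exact biprod.total
  refine ⟨ShortComplex.homologyMap a, ShortComplex.homologyMap b, ?_, ?_⟩
  · rw [← ShortComplex.homologyMap_id, ← h2, ShortComplex.homologyMap_add,
      ShortComplex.homologyMap_comp, ShortComplex.homologyMap_comp,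
      (show ShortComplex.homologyMap a' = 0 from hz.eq_of_tgt _ _)]
    simp
  · rw [← ShortComplex.homologyMap_comp, h1, ShortComplex.homologyMap_id]

lemma H0_dsum (N K : Z2Cx R) (h : IsZero (H0 R K)) : Nonempty (H0 R (dsum R N K) ≅ H0 R N) :=
  homology_biprod _ _ _ _ _ _ _ h

lemma H1_dsum (N K : Z2Cx R) (h : IsZero (H1 R K)) : Nonempty (H1 R (dsum R N K) ≅ H1 R N) :=
  homology_biprod _ _ _ _ _ _ _ h

lemma H1_dsum' (N K : Z2Cx R) (h : IsZero (H1 R N)) : Nonempty (H1 R (dsum R N K) ≅ H1 R K) := by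
  obtain ⟨e⟩ := H1_dsum K N h
  exact ⟨H1iso (dsumComm N K) ≪≫ e⟩

lemma homology_coker {A B C D : R} (f : A ⟶ B) (g : B ⟶ C) (w : f ≫ g = 0) (hg : g = 0)
    (p : B ⟶ D) (w' : f ≫ p = 0) (h : (ShortComplex.mk f p w').Exact) (hp : Epi p) :
    Nonempty ((ShortComplex.mk f g w).homology ≅ D) := by
  subst hg
  have : Epi (ShortComplex.mk f p w').g := hp
  exact ⟨(ShortComplex.HomologyData.ofIsColimitCokernelCofork (ShortComplex.mk f 0 w) rfl
    _ h.gIsCokernel).left.homologyIso⟩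

lemma homology_zero {A B C : R} (f : A ⟶ B) (g : B ⟶ C) (w : f ≫ g = 0) (hg : Mono g)
    (hf : f = 0) : IsZero (ShortComplex.mk f g w).homology := by
  subst hf
  exact (ShortComplex.exact_iff_isZero_homology _).1 ((ShortComplex.exact_iff_mono _ rfl).2 hg)

/-- the complex attached to a pair of morphisms -/
abbrev CC {P Q P' Q' : R} (f : P ⟶ Q) (g : P' ⟶ Q') : Z2Cx R :=
  dsum R (Cf R f) (dagger R (Cf R g))

lemma H0_CC {P Q P' Q' A : R} (f : P ⟶ Q) (g : P' ⟶ Q') (hg : Mono g)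
    (p : Q ⟶ A) (w : f ≫ p = 0) (h : (ShortComplex.mk f p w).ShortExact) :
    Nonempty (H0 R (CC f g) ≅ A) := by
  obtain ⟨e⟩ := H0_dsum (Cf R f) (dagger R (Cf R g))
    (homology_zero (-0 : Q' ⟶ P') (-g) (by simp) inferInstance (by simp))
  obtain ⟨e'⟩ := homology_coker f (0 : Q ⟶ P) (by simp) rfl p w h.exact h.epi_g
  exact ⟨e ≪≫ e'⟩

lemma H1_CC {P Q P' Q' B : R} (f : P ⟶ Q) (g : P' ⟶ Q') (hf : Mono f)
    (p : Q' ⟶ B) (w : g ≫ p = 0) (h : (ShortComplex.mk g p w).ShortExact) :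
    Nonempty (H1 R (CC f g) ≅ B) := by
  obtain ⟨e⟩ := H1_dsum' (Cf R f) (dagger R (Cf R g))
    (homology_zero (0 : Q ⟶ P) f (by simp) inferInstance rfl)
  have hex : (ShortComplex.mk (-g) (-p) (by simp [w])).Exact := by
    let iso : ShortComplex.mk g p w ≅ ShortComplex.mk (-g) (-p) (by simp [w]) :=
      ShortComplex.isoMk (Iso.refl P') (⟨-𝟙 Q', -𝟙 Q', by simp, by simp⟩) (Iso.refl B)
        (by simp) (by simp)
    exact (ShortComplex.exact_iff_of_iso iso).1 h.exact
  have := h.epi_g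
  have hep : Epi (-p) := by
    have : Epi p := h.epi_g
    infer_instance
  obtain ⟨e'⟩ := homology_coker (-g) (-0 : Q' ⟶ P') (by simp) (by simp) (-p) (by simp [w])
    hex hep
  exact ⟨e ≪≫ e'⟩

lemma finHom_of_iso {A B : R} (e : A ≅ B) (h : IsFinHom R B) : IsFinHom R A := by
  intro M
  have := h M
  exact Finite.of_injective (fun f : M ⟶ A => f ≫ e.hom) (fun f g hfg => by
    simpa using congrArg (fun t => t ≫ e.inv) hfg)

lemma finHom_of_isZero {A : R} (h : IsZero A) : IsFinHom R A := by
  intro M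
  have : Subsingleton (M ⟶ A) := ⟨fun f g => h.eq_of_tgt f g⟩
  infer_instance

lemma finCx_of_contr {K : Z2Cx R} (p0 : Projective K.X0) (p1 : Projective K.X1) (h : Contr K) :
    FinCx R K :=
  ⟨p0, p1, finHom_of_isZero (isZero_H0 h), finHom_of_isZero (isZero_H1 h)⟩

lemma proj_biprod {A B : R} (hA : Projective A) (hB : Projective B) : Projective (A ⊞ B) :=
  inferInstance

lemma finCx_dsum {M K : Z2Cx R} (hM : FinCx R M) (hK : FinCx R K) (h : Contr K) :
    FinCx R (dsum R M K) := by
  obtain ⟨e⟩ := H0_dsum M K (isZero_H0 h)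
  obtain ⟨e'⟩ := H1_dsum M K (isZero_H1 h)
  exact ⟨proj_biprod hM.1 hK.1, proj_biprod hM.2.1 hK.2.1, finHom_of_iso e hM.2.2.1,
    finHom_of_iso e' hM.2.2.2⟩

lemma finCx_of_iso {M N : Z2Cx R} (e : M ≅ N) (h : FinCx R N) : FinCx R M :=
  ⟨Projective.of_iso (iso0 e).symm h.1, Projective.of_iso (iso1 e).symm h.2.1,
    finHom_of_iso (H0iso e) h.2.2.1, finHom_of_iso (H1iso e) h.2.2.2⟩
/-! ### Classes in the Grothendieck group -/

lemma cls_ses (T : ShortComplex R) (h : T.ShortExact) :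
    K0.cls R T.X₂ = K0.cls R T.X₁ + K0.cls R T.X₃ := by
  have h1 : FreeAbelianGroup.of T.X₂ - FreeAbelianGroup.of T.X₁ - FreeAbelianGroup.of T.X₃ ∈
      AddSubgroup.closure (sesSet R) := AddSubgroup.subset_closure ⟨T, h, rfl⟩
  have h2 := (QuotientAddGroup.eq_zero_iff _).2 h1
  have h3 : K0.cls R T.X₂ - K0.cls R T.X₁ - K0.cls R T.X₃ = 0 := h2
  rw [sub_sub, sub_eq_zero] at h3
  exact h3

lemma cls_biprod (A B : R) : K0.cls R (A ⊞ B) = K0.cls R A + K0.cls R B := by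
  have := cls_ses _ (triv_ses A B)
  rw [add_comm]; exact this

lemma ses_of_iso {Z A B : R} (hZ : IsZero Z) (e : A ≅ B) :
    (ShortComplex.mk (0 : Z ⟶ A) e.hom (by simp)).ShortExact :=
  ShortComplex.Splitting.shortExact
    { r := 0, s := e.inv, f_r := hZ.eq_of_src _ _, s_g := by simp, id := by simp }

lemma cls_isZero {Z : R} (hZ : IsZero Z) : K0.cls R Z = 0 := by
  have h : K0.cls R Z = K0.cls R Z + K0.cls R Z := cls_ses _ (ses_of_iso hZ (Iso.refl Z))
  simpa using h

lemma cls_iso {A B : R} (e : A ≅ B) : K0.cls R A = K0.cls R B := by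
  have hZ : IsZero (kernel (𝟙 A)) := by
    rw [IsZero.iff_id_eq_zero, ← cancel_mono (kernel.ι (𝟙 A))]
    have := kernel.condition (𝟙 A)
    simp at this
    simp [this]
  have h : K0.cls R A = K0.cls R (kernel (𝟙 A)) + K0.cls R B := cls_ses _ (ses_of_iso hZ e)
  rw [h, cls_isZero hZ, zero_add]

lemma ker_iso {A B A' B' : R} (f : A ⟶ B) (f' : A' ⟶ B') (a : A ≅ A') (b : B ≅ B')
    (h : f ≫ b.hom = a.hom ≫ f') : K0.cls R (kernel f) = K0.cls R (kernel f') :=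
  cls_iso (kernel.mapIso f f' a b h)

lemma ker_biprod {A B A' B' : R} (f : A ⟶ B) (f' : A' ⟶ B') :
    K0.cls R (kernel (biprod.map f f')) = K0.cls R (kernel f) + K0.cls R (kernel f') := by
  rw [← cls_biprod]
  refine cls_iso ⟨biprod.lift (kernel.lift _ (kernel.ι _ ≫ biprod.fst) ?_)
    (kernel.lift _ (kernel.ι _ ≫ biprod.snd) ?_),
    kernel.lift _ (biprod.map (kernel.ι f) (kernel.ι f')) ?_, ?_, ?_⟩
  · rw [Category.assoc, ← biprod.map_fst f f', kernel.condition_assoc, zero_comp]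
  · rw [Category.assoc, ← biprod.map_snd f f', kernel.condition_assoc, zero_comp]
  · rw [← bmap_comp]; ext <;> simp
  · rw [← cancel_mono (kernel.ι _)]
    ext <;> simp
  · ext <;> simp

lemma ker_mono {A B : R} (f : A ⟶ B) [Mono f] : K0.cls R (kernel f) = 0 := by
  apply cls_isZero
  rw [IsZero.iff_id_eq_zero, ← cancel_mono (kernel.ι f), ← cancel_mono f]
  simp

lemma ker_zero {A B : R} (f : A ⟶ B) (h : f = 0) : K0.cls R (kernel f) = K0.cls R A := by
  subst h
  exact cls_iso kernelZeroIsoSource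

def z0 (M : Z2Cx R) : K0 R := K0.cls R (kernel M.d0)
def z1 (M : Z2Cx R) : K0 R := K0.cls R (kernel M.d1)

lemma z0_iso {M N : Z2Cx R} (e : M ≅ N) : z0 M = z0 N :=
  ker_iso _ _ _ _ (iso_comm0 e)
lemma z1_iso {M N : Z2Cx R} (e : M ≅ N) : z1 M = z1 N :=
  ker_iso _ _ _ _ (iso_comm1 e)
lemma z0_dsum (M N : Z2Cx R) : z0 (dsum R M N) = z0 M + z0 N := ker_biprod _ _
lemma z1_dsum (M N : Z2Cx R) : z1 (dsum R M N) = z1 M + z1 N := ker_biprod _ _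

/-- The standard contractible complex. -/
abbrev Kc (P Q : R) : Z2Cx R := dsum R (KP R P) (dagger R (KP R Q))

lemma contr_Kc (P Q : R) : Contr (Kc P Q) := contr_dsum (contr_KP P) (contr_dagger (contr_KP Q))

lemma finCx_KP {P : R} (hP : Projective P) : FinCx R (KP R P) :=
  finCx_of_contr hP hP (contr_KP P)

lemma finCx_dKP {P : R} (hP : Projective P) : FinCx R (dagger R (KP R P)) :=
  finCx_of_contr hP hP (contr_dagger (contr_KP P))

lemma finCx_Kc {P Q : R} (hP : Projective P) (hQ : Projective Q) : FinCx R (Kc P Q) :=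
  finCx_dsum (finCx_KP hP) (finCx_dKP hQ) (contr_dagger (contr_KP Q))

lemma z0_Kc (P Q : R) : z0 (Kc P Q) = K0.cls R P := by
  rw [z0_dsum]
  have h1 : z0 (KP R P) = K0.cls R P := ker_zero _ rfl
  have h2 : z0 (dagger R (KP R Q)) = 0 := ker_mono (-𝟙 Q)
  rw [h1, h2, add_zero]

lemma z1_Kc (P Q : R) : z1 (Kc P Q) = K0.cls R Q := by
  rw [z1_dsum]
  have h1 : z1 (KP R P) = 0 := ker_mono (𝟙 P)
  have h2 : z1 (dagger R (KP R Q)) = K0.cls R Q := ker_zero (-0 : Q ⟶ Q) (by simp)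
  rw [h1, h2, zero_add]

/-- Every class of an object is a difference of classes of projectives. -/
lemma cls_proj (dd : DecData R) (X : R) : ∃ P Q : R, Projective P ∧ Projective Q ∧
    K0.cls R X = K0.cls R P - K0.cls R Q := by
  let X0 := Projective.over X
  let π : X0 ⟶ X := Projective.π X
  let X1 := Projective.over (kernel π)
  let σ : X1 ⟶ kernel π := Projective.π _
  let d : X1 ⟶ X0 := σ ≫ kernel.ι π
  obtain ⟨P, Q, P', Q', f, g, hP, hQ, hP', hQ', mf, mg, ⟨e⟩, -, -⟩ :=
    dd.spec (Cf R d) (Projective.projective_over X) (Projective.projective_over _)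
  obtain ⟨a0, a1, c1⟩ : ∃ (a0 : X0 ≅ Q ⊞ P') (a1 : X1 ≅ P ⊞ Q'),
      d ≫ a0.hom = a1.hom ≫ biprod.map f (-0) := ⟨iso0 e, iso1 e, iso_comm1 e⟩
  let m : P ⟶ X0 := f ≫ biprod.inl ≫ a0.inv
  have hm : Mono m := inferInstance
  have hd : d = (a1.hom ≫ biprod.fst) ≫ m := by
    rw [← cancel_mono a0.hom, c1]
    ext <;> simp [m]
  have hm' : m = (biprod.inl ≫ a1.inv) ≫ d := by
    rw [hd]; simp
  have w : m ≫ π = 0 := by rw [hm']; simp [d]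
  have hse : (ShortComplex.mk m π w).ShortExact := by
    have hπ : Epi π := inferInstanceAs (Epi (Projective.π X))
    refine ⟨?_⟩
    rw [ShortComplex.exact_iff_epi_kernel_lift]
    have : (a1.hom ≫ biprod.fst) ≫ kernel.lift π m w = σ := by
      rw [← cancel_mono (kernel.ι π), Category.assoc, kernel.lift_ι, ← hd]
    have hσ : Epi ((a1.hom ≫ biprod.fst) ≫ kernel.lift π m w) := by
      rw [this]; exact inferInstanceAs (Epi (Projective.π (kernel π)))
    exact epi_of_epi (a1.hom ≫ biprod.fst) _
  refine ⟨X0, P, Projective.projective_over X, hP, ?_⟩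
  have : K0.cls R X0 = K0.cls R P + K0.cls R X := cls_ses _ hse
  rw [this]
  abel

/-! ### Schanuel -/

def sch {Q Q' : R} (s : Q ⟶ Q') (t : Q' ⟶ Q) : Q ⊞ Q' ⟶ Q' ⊞ Q :=
  biprod.desc (biprod.lift s (𝟙 _)) (biprod.lift (𝟙 _ - t ≫ s) (-t))

lemma sch_sch {Q Q' : R} (s : Q ⟶ Q') (t : Q' ⟶ Q) : sch s t ≫ sch t s = 𝟙 _ := by
  unfold sch; ext <;> simp

lemma sch_lift {P Q P' Q' A : R} (f : P ⟶ Q) (p : Q ⟶ A) (w : f ≫ p = 0)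
    (f' : P' ⟶ Q') (p' : Q' ⟶ A) (w' : f' ≫ p' = 0)
    (h' : (ShortComplex.mk f' p' w').ShortExact) (s : Q ⟶ Q') (t : Q' ⟶ Q)
    (hs : s ≫ p' = p) (ht : t ≫ p = p') :
    ∃ b : P ⊞ Q' ⟶ P' ⊞ Q, b ≫ biprod.map f' (𝟙 _) = biprod.map f (𝟙 _) ≫ sch s t := by
  have : Mono f' := h'.mono_f
  have : Mono (ShortComplex.mk f' p' w').f := h'.mono_f
  obtain ⟨φ, hφ⟩ : ∃ φ : P ⟶ P', φ ≫ f' = f ≫ s := h'.exact.lift' (f ≫ s) (by simp [hs, w])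
  obtain ⟨η, hη⟩ : ∃ η : Q' ⟶ P', η ≫ f' = 𝟙 _ - t ≫ s :=
    h'.exact.lift' (𝟙 _ - t ≫ s) (by simp [hs, ht])
  refine ⟨biprod.desc (biprod.lift φ f) (biprod.lift η (-t)), ?_⟩
  unfold sch
  ext <;> simp [hφ, hη]

lemma schanuel {P Q P' Q' A : R} (f : P ⟶ Q) (p : Q ⟶ A) (w : f ≫ p = 0)
    (h : (ShortComplex.mk f p w).ShortExact) (hQ : Projective Q)
    (f' : P' ⟶ Q') (p' : Q' ⟶ A) (w' : f' ≫ p' = 0)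
    (h' : (ShortComplex.mk f' p' w').ShortExact) (hQ' : Projective Q') :
    Nonempty (dsum R (Cf R f) (KP R Q') ≅ dsum R (Cf R f') (KP R Q)) := by
  have : Epi p := h.epi_g
  have : Epi p' := h'.epi_g
  have : Mono f := h.mono_f
  have : Mono f' := h'.mono_f
  have hs : Projective.factorThru p p' ≫ p' = p := Projective.factorThru_comp _ _
  have ht : Projective.factorThru p' p ≫ p = p' := Projective.factorThru_comp _ _
  generalize Projective.factorThru p p' = s at hs
  generalize Projective.factorThru p' p = t at ht
  obtain ⟨b, hb⟩ := sch_lift f p w f' p' w' h' s t hs ht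
  obtain ⟨c, hc⟩ := sch_lift f' p' w' f p w h t s ht hs
  have bc : b ≫ c = 𝟙 _ := by
    rw [← cancel_mono (biprod.map f (𝟙 Q')), Category.assoc, hc, reassoc_of% hb, sch_sch]
    simp
  have cb : c ≫ b = 𝟙 _ := by
    rw [← cancel_mono (biprod.map f' (𝟙 Q)), Category.assoc, hb, reassoc_of% hc, sch_sch]
    simp
  let a0 : Q ⊞ Q' ≅ Q' ⊞ Q := ⟨sch s t, sch t s, sch_sch _ _, sch_sch _ _⟩
  let a1 : P ⊞ Q' ≅ P' ⊞ Q := ⟨b, c, bc, cb⟩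
  have c0 : biprod.map (0 : Q ⟶ P) (0 : Q' ⟶ Q') ≫ a1.hom =
      a0.hom ≫ biprod.map (0 : Q' ⟶ P') (0 : Q ⟶ Q) := by
    have e1 : biprod.map (0 : Q ⟶ P) (0 : Q' ⟶ Q') = 0 := by ext <;> simp
    have e2 : biprod.map (0 : Q' ⟶ P') (0 : Q ⟶ Q) = 0 := by ext <;> simp
    rw [e1, e2]; simp
  exact ⟨mkIso a0 a1 c0 hb.symm⟩

lemma CC_stable {P Q A P1 Q1 P' Q' B P1' Q1' : R}
    (f : P ⟶ Q) (p : Q ⟶ A) (w : f ≫ p = 0)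
    (h : (ShortComplex.mk f p w).ShortExact) (hQ : Projective Q)
    (f1 : P1 ⟶ Q1) (p1 : Q1 ⟶ A) (w1 : f1 ≫ p1 = 0)
    (h1 : (ShortComplex.mk f1 p1 w1).ShortExact) (hQ1 : Projective Q1)
    (f' : P' ⟶ Q') (p' : Q' ⟶ B) (w' : f' ≫ p' = 0)
    (h' : (ShortComplex.mk f' p' w').ShortExact) (hQ' : Projective Q')
    (f1' : P1' ⟶ Q1') (p1' : Q1' ⟶ B) (w1' : f1' ≫ p1' = 0)
    (h1' : (ShortComplex.mk f1' p1' w1').ShortExact) (hQ1' : Projective Q1') :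
    Nonempty (dsum R (CC f f') (Kc Q1 Q1') ≅ dsum R (CC f1 f1') (Kc Q Q')) := by
  obtain ⟨a⟩ := schanuel f p w h hQ f1 p1 w1 h1 hQ1
  obtain ⟨b⟩ := schanuel f' p' w' h' hQ' f1' p1' w1' h1' hQ1'
  exact ⟨shuffle _ _ _ _ ≪≫ dsumIso a ((daggerDsum _ _).symm ≪≫ daggerIso b ≪≫ daggerDsum _ _) ≪≫
    shuffle _ _ _ _⟩

/-! ### Effective classes -/

open ZeroObject in
lemma k0_proj (dd : DecData R) (x : K0 R) : ∃ P Q : R, Projective P ∧ Projective Q ∧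
    x = K0.cls R P - K0.cls R Q := by
  obtain ⟨y, rfl⟩ := QuotientAddGroup.mk_surjective x
  induction y using FreeAbelianGroup.induction_on with
  | zero =>
    obtain ⟨P, Q, hP, hQ, -⟩ := cls_proj dd (0 : R)
    exact ⟨P, P, hP, hP, by simp⟩
  | of X => exact cls_proj dd X
  | neg X h =>
    obtain ⟨P, Q, hP, hQ, h⟩ := h
    refine ⟨Q, P, hQ, hP, ?_⟩
    rw [QuotientAddGroup.mk_neg, h]; abel
  | add x y hx hy =>
    obtain ⟨P, Q, hP, hQ, h⟩ := hx
    obtain ⟨P', Q', hP', hQ', h'⟩ := hy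
    refine ⟨P ⊞ P', Q ⊞ Q', proj_biprod hP hP', proj_biprod hQ hQ', ?_⟩
    rw [QuotientAddGroup.mk_add, h, h', cls_biprod, cls_biprod]; abel

def Eff (γ : K0 R × K0 R) : Prop :=
  ∃ P Q : R, Projective P ∧ Projective Q ∧ γ = (K0.cls R P, K0.cls R Q)

lemma Eff.add {γ γ' : K0 R × K0 R} (h : Eff γ) (h' : Eff γ') : Eff (γ + γ') := by
  obtain ⟨P, Q, hP, hQ, rfl⟩ := h
  obtain ⟨P', Q', hP', hQ', rfl⟩ := h'
  refine ⟨P ⊞ P', Q ⊞ Q', proj_biprod hP hP', proj_biprod hQ hQ', ?_⟩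
  rw [cls_biprod, cls_biprod]; rfl

lemma eff_shift (dd : DecData R) (γ : K0 R × K0 R) : ∃ δ, Eff δ ∧ Eff (γ + δ) := by
  obtain ⟨a, b⟩ := γ
  obtain ⟨P, Q, hP, hQ, rfl⟩ := k0_proj dd a
  obtain ⟨P', Q', hP', hQ', rfl⟩ := k0_proj dd b
  exact ⟨(K0.cls R Q, K0.cls R Q'), ⟨_, _, hQ, hQ', rfl⟩, ⟨_, _, hP, hP', by simp⟩⟩

lemma eff_finset (dd : DecData R) (s : Finset (K0 R × K0 R)) :
    ∃ δ, Eff δ ∧ ∀ γ ∈ s, Eff (γ + δ) := by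
  induction s using Finset.induction_on with
  | empty =>
    obtain ⟨δ, h, -⟩ := eff_shift dd (0 : K0 R × K0 R)
    exact ⟨δ, h, by simp⟩
  | insert a s _ ih =>
    obtain ⟨δ, h, hs⟩ := ih
    obtain ⟨δ', h', ha⟩ := eff_shift dd a
    refine ⟨δ + δ', h.add h', ?_⟩
    intro γ hγ
    rcases Finset.mem_insert.1 hγ with rfl | hγ
    · have := ha.add h
      convert this using 1; abel
    · have := (hs γ hγ).add h'
      convert this using 1; abel

/-! ### The Hall algebra -/

lemma hom_card_one {M K : Z2Cx R} (hK : Contr K) : Nat.card (Hcx R M ⟶ Hcx R K) = 1 := by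
  rw [Nat.card_eq_one_iff_unique]
  refine ⟨⟨fun f g => ?_⟩, ⟨Z2Cx.Hom.mk 0 0 ?_ ?_⟩⟩
  · exact Z2Cx.Hom.ext ((isZero_H0 hK).eq_of_tgt _ _) ((isZero_H1 hK).eq_of_tgt _ _)
  · simp
  · simp

lemma mulH_contr (S : DHSetting k R) (M K L : FCx R) (hK : Contr K.1)
    (e : L.1 ≅ dsum R M.1 K.1) : ∃ s : ℂ, s ≠ 0 ∧
      S.mulH (Finsupp.single (fcls R M) 1) (Finsupp.single (fcls R K) 1) =
        s • Finsupp.single (fcls R L) 1 := by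
  have hL : fc2c R (fcls R L) = ccls R (dsum R M.1 K.1) := Quot.sound ⟨e⟩
  refine ⟨hallCoeff S.v S.ed S.dd M.1 K.1 (ccls R (dsum R M.1 K.1)), ?_, ?_⟩
  · unfold hallCoeff hVal
    rw [extCount_self M.2.1 M.2.2.1 hK, hom_card_one hK]
    have h1 : (0:ℝ) < Fintype.card k := by exact_mod_cast Fintype.card_pos
    have h2 := Real.rpow_pos_of_pos h1 ((mu S.ed S.dd M.1 K.1 : ℚ) : ℝ)
    have h3 := Real.rpow_pos_of_pos S.v_pos (((S.ed.eQ (K0.cls R M.1.X0) (K0.cls R K.1.X0) +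
      S.ed.eQ (K0.cls R M.1.X1) (K0.cls R K.1.X1) : ℚ)) : ℝ)
    refine Complex.ofReal_ne_zero.2 (ne_of_gt ?_)
    refine div_pos (mul_pos h3 ?_) (mul_pos h2 ?_) <;> norm_num
  · ext c
    rw [S.mulH_single]
    by_cases hc : c = fcls R L
    · subst hc
      rw [hL]; simp
    · have : fc2c R c ≠ ccls R (dsum R M.1 K.1) := by
        rw [← hL]; exact fun h => hc (fc2c_inj h)
      rw [Finsupp.smul_apply, Finsupp.single_apply, if_neg (Ne.symm hc)]
      unfold hallCoeff
      rw [extCount_ne M.2.1 M.2.2.1 hK _ this]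
      simp

abbrev br (S : DHSetting k R) (M : FCx R) : S.D := S.loc (Finsupp.single (fcls R M) 1)

open ZeroObject in
lemma finCx_zero : FinCx R (zeroCx R) := by
  have hz : IsZero (0 : R) := isZero_zero R
  refine finCx_of_contr (inferInstanceAs (Projective (0 : R)))
    (inferInstanceAs (Projective (0 : R))) ⟨0, 0, ?_, ?_⟩
  · exact hz.eq_of_tgt _ _
  · exact hz.eq_of_tgt _ _

lemma locKK (S : DHSetting k R) (x : FCls R →₀ ℂ) (γ γ' : K0 R × K0 R) :
    S.mulD (S.mulD (S.loc x) (S.KK γ)) (S.KK γ') = S.mulD (S.loc x) (S.KK (γ + γ')) := by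
  have h := S.mul_general x ⟨zeroCx R, finCx_zero⟩ γ.1 γ.2 γ'.1 γ'.2
  rw [← S.loc_mul, S.loc_one, S.one_mul, S.mul_one] at h
  have h0 : clsOf R (zeroCx R) = 0 := sub_self _
  have h1 : sForm k R S.ed (γ.1 - γ.2) (clsOf R (zeroCx R)) = 0 := by
    rw [h0]; unfold sForm; simp
  simp only [h1] at h
  simp only [Rat.cast_zero, Real.rpow_zero, Complex.ofReal_one, one_smul] at h
  exact h

lemma br_contr (S : DHSetting k R) (M L : FCx R) {P Q : R} (hP : Projective P)
    (hQ : Projective Q) (e : L.1 ≅ dsum R M.1 (Kc P Q)) : ∃ s : ℂ, s ≠ 0 ∧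
      S.mulD (br S M) (S.KK (K0.cls R P, K0.cls R Q)) = s • br S L := by
  obtain ⟨s, hs, h⟩ := mulH_contr S M ⟨Kc P Q, finCx_Kc hP hQ⟩ L (contr_Kc P Q) e
  obtain ⟨t, ht, h'⟩ := mulH_contr S ⟨KP R P, finCx_KP hP⟩ ⟨dagger R (KP R Q), finCx_dKP hQ⟩
    ⟨Kc P Q, finCx_Kc hP hQ⟩ (contr_dagger (contr_KP Q)) (Iso.refl _)
  have h1 := congrArg S.loc h
  have h2 := congrArg S.loc h'
  rw [← S.loc_mul, map_smul] at h1 h2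
  rw [S.KK_P P hP, S.KK_Pd Q hQ, S.KK_mul] at h2
  refine ⟨t * s, mul_ne_zero ht hs, ?_⟩
  have h3 : ((K0.cls R P, K0.cls R Q) : K0 R × K0 R) = (K0.cls R P, 0) + (0, K0.cls R Q) := by simp
  rw [h3, h2, map_smul, h1, smul_smul]

lemma E_KK (S : DHSetting k R) (M : FCx R) : ∃ u : ℂ, u ≠ 0 ∧ ∀ γ,
    S.mulD (Eelt S M.1 M.2) (S.KK γ) =
      u • S.mulD (br S M) (S.KK (γ - (S.dd.cplus M.1, S.dd.cminus M.1))) := by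
  unfold Eelt
  have h := S.comm_rule (-(S.dd.cplus M.1)) (-(S.dd.cminus M.1)) M
  have hv (r : ℝ) : (((S.v ^ r : ℝ)) : ℂ) ≠ 0 :=
    Complex.ofReal_ne_zero.2 (Real.rpow_pos_of_pos S.v_pos r).ne'
  refine ⟨_ * _, mul_ne_zero
    (hv ((S.ed.eQ (S.dd.cplus M.1 - S.dd.cminus M.1) (clsOf R M.1) : ℚ) : ℝ))
    (hv ((sForm k R S.ed (-(S.dd.cplus M.1) - -(S.dd.cminus M.1)) (clsOf R M.1) : ℚ) : ℝ)),
    fun γ => ?_⟩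
  rw [show (⟨M.1, M.2⟩ : FCx R) = M from rfl, h]
  rw [smul_smul, map_smul, LinearMap.smul_apply, locKK]
  congr 3
  rw [sub_eq_neg_add]; rfl

/-! ### The main argument -/

lemma isoA_equiv : Equivalence (fun A B : {A : R // IsFinHom R A} => Nonempty (A.1 ≅ B.1)) :=
  ⟨fun M => ⟨Iso.refl M.1⟩, fun ⟨e⟩ => ⟨e.symm⟩, fun ⟨e⟩ ⟨f⟩ => ⟨e ≪≫ f⟩⟩

lemma out_iso (A : R) (hA : IsFinHom R A) : ∃ a : IsoA R, Nonempty ((Quot.out a).1 ≅ A) := by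
  refine ⟨Quot.mk _ ⟨A, hA⟩, ?_⟩
  exact (isoA_equiv.quot_mk_eq_iff _ (⟨A, hA⟩ : {A : R // IsFinHom R A})).1 (Quot.out_eq _)

lemma out_inj {a b : IsoA R} (e : (Quot.out a).1 ≅ (Quot.out b).1) : a = b := by
  rw [← Quot.out_eq a, ← Quot.out_eq b]
  exact Quot.sound ⟨e⟩

lemma ses_comp_iso {P Q A B : R} (f : P ⟶ Q) (p : Q ⟶ A) (w : f ≫ p = 0)
    (h : (ShortComplex.mk f p w).ShortExact) (e : A ≅ B) (w' : f ≫ p ≫ e.hom = 0) :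
    (ShortComplex.mk f (p ≫ e.hom) w').ShortExact :=
  ShortComplex.shortExact_of_iso (S₁ := ShortComplex.mk f p w)
    (ShortComplex.isoMk (Iso.refl _) (Iso.refl _) e (by simp) (by simp)) h

lemma ses_coker {P Q : R} (f : P ⟶ Q) (hf : Mono f) :
    (ShortComplex.mk f (cokernel.π f) (cokernel.condition f)).ShortExact where
  exact := ShortComplex.exact_cokernel f
  mono_f := hf
  epi_g := inferInstance

section

variable (S : DHSetting k R)
    (rP rQ : R → R) (rf : ∀ C : R, rP C ⟶ rQ C)
    (hfds : ∀ A B : R, IsFinHom R A → IsFinHom R B →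
      FinCx R (Z2Cx.dsum R (Z2Cx.Cf R (rf A)) (Z2Cx.dagger R (Z2Cx.Cf R (rf B)))))

/-- The complexes indexing the basis. -/
def Cp (p : IsoA R × IsoA R) : FCx R :=
  ⟨CC (rf (Quot.out p.1).1) (rf (Quot.out p.2).1),
    hfds (Quot.out p.1).1 (Quot.out p.2).1 (Quot.out p.1).2 (Quot.out p.2).2⟩

lemma br_iso {M N : FCx R} (e : M.1 ≅ N.1) : br S M = br S N := by
  unfold br; rw [fcls_eq e]

lemma reduceM (rπ : ∀ C : R, rQ C ⟶ C)
    (hres : ∀ C : R, IsFinHom R C → Projective (rP C) ∧ Projective (rQ C) ∧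
      ∃ w : rf C ≫ rπ C = 0, (ShortComplex.mk (rf C) (rπ C) w).ShortExact)
    (M : FCx R) : ∃ (p : IsoA R × IsoA R) (ε : K0 R × K0 R) (s : ℂ), 
    br S M = s • S.mulD (br S (Cp rP rQ rf hfds p)) (S.KK ε) := by
  obtain ⟨P, Q, P', Q', f, g, hP, hQ, hP', hQ', mf, mg, ⟨e⟩, -, -⟩ := S.dd.spec M.1 M.2.1 M.2.2.1
  have hf := ses_coker f mf
  have hg := ses_coker g mg
  obtain ⟨e0⟩ := H0_CC f g mg _ _ hf
  obtain ⟨e1⟩ := H1_CC f g mf _ _ hg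
  have fA : IsFinHom R (cokernel f) := finHom_of_iso (e0.symm ≪≫ (H0iso e).symm) M.2.2.2.1
  have fB : IsFinHom R (cokernel g) := finHom_of_iso (e1.symm ≪≫ (H1iso e).symm) M.2.2.2.2
  obtain ⟨a, ⟨ia⟩⟩ := out_iso _ fA
  obtain ⟨b, ⟨ib⟩⟩ := out_iso _ fB
  obtain ⟨hp1, hq1, w1, h1⟩ := hres _ (Quot.out a).2
  obtain ⟨hp2, hq2, w2, h2⟩ := hres _ (Quot.out b).2
  obtain ⟨σ⟩ := CC_stable f _ _ hf hQ _ _ _ (ses_comp_iso _ _ w1 h1 ia (by rw [reassoc_of% w1]; simp)) hq1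
    g _ _ hg hQ' _ _ _ (ses_comp_iso _ _ w2 h2 ib (by rw [reassoc_of% w2]; simp)) hq2
  let L : FCx R := ⟨dsum R M.1 (Kc (rQ (Quot.out a).1) (rQ (Quot.out b).1)),
    finCx_dsum M.2 (finCx_Kc hq1 hq2) (contr_Kc _ _)⟩
  obtain ⟨s, hs, h⟩ := br_contr S M L hq1 hq2 (Iso.refl _)
  obtain ⟨t, ht, h'⟩ := br_contr S (Cp rP rQ rf hfds (a, b)) L hQ hQ' (dsumIso e (Iso.refl _) ≪≫ σ)
  have h3 : S.mulD (br S M) (S.KK (K0.cls R (rQ (Quot.out a).1), K0.cls R (rQ (Quot.out b).1))) =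
      (s * t⁻¹) • S.mulD (br S (Cp rP rQ rf hfds (a, b))) (S.KK (K0.cls R Q, K0.cls R Q')) := by
    rw [h, h', smul_smul, mul_assoc, inv_mul_cancel₀ ht, mul_one]
  have h4 := congrArg (fun x => S.mulD x
    (S.KK (-(K0.cls R (rQ (Quot.out a).1), K0.cls R (rQ (Quot.out b).1))))) h3
  simp only [map_smul, LinearMap.smul_apply] at h4
  rw [locKK, locKK, add_neg_cancel, S.KK_zero, S.mul_one] at h4
  exact ⟨_, _, _, h4⟩

/-- The basis. -/
def bas (i : (IsoA R × IsoA R) × (K0 R × K0 R)) : S.D :=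
  S.mulD (Eelt S (Cp rP rQ rf hfds i.1).1 (Cp rP rQ rf hfds i.1).2) (S.KK i.2)

lemma bas_span (rπ : ∀ C : R, rQ C ⟶ C)
    (hres : ∀ C : R, IsFinHom R C → Projective (rP C) ∧ Projective (rQ C) ∧
      ∃ w : rf C ≫ rπ C = 0, (ShortComplex.mk (rf C) (rπ C) w).ShortExact)
    (d : S.D) : d ∈ Submodule.span ℂ (Set.range (bas S rP rQ rf hfds)) := by
  obtain ⟨x, a, b, rfl⟩ := S.span d
  induction x using Finsupp.induction_linear with
  | zero => simp
  | add x y hx hy =>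
    rw [map_add, map_add, LinearMap.add_apply]
    exact Submodule.add_mem _ hx hy
  | single c z =>
    obtain ⟨M, hM⟩ : ∃ M : FCx R, fcls R M = c := Quot.exists_rep c
    subst hM
    have e1 : Finsupp.single (fcls R M) z = z • Finsupp.single (fcls R M) 1 := by
      rw [Finsupp.smul_single, smul_eq_mul, mul_one]
    rw [e1, map_smul, map_smul, LinearMap.smul_apply]
    apply Submodule.smul_mem
    obtain ⟨p, ε, s, h⟩ := reduceM S rP rQ rf hfds rπ hres M
    unfold br at h
    rw [h, map_smul, LinearMap.smul_apply, locKK]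
    apply Submodule.smul_mem
    obtain ⟨u, hu, hE⟩ := E_KK S (Cp rP rQ rf hfds p)
    have h5 := hE (ε + (a, b) + (S.dd.cplus (Cp rP rQ rf hfds p).1, S.dd.cminus (Cp rP rQ rf hfds p).1))
    rw [add_sub_cancel_right] at h5
    have h6 : S.mulD (br S (Cp rP rQ rf hfds p)) (S.KK (ε + (a, b))) =
        u⁻¹ • bas S rP rQ rf hfds (p, ε + (a, b) +
          (S.dd.cplus (Cp rP rQ rf hfds p).1, S.dd.cminus (Cp rP rQ rf hfds p).1)) := by
      unfold bas
      rw [h5, smul_smul, inv_mul_cancel₀ hu, one_smul]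
    rw [h6]
    exact Submodule.smul_mem _ _ (Submodule.subset_span ⟨_, rfl⟩)

lemma sep (rπ : ∀ C : R, rQ C ⟶ C)
    (hres : ∀ C : R, IsFinHom R C → Projective (rP C) ∧ Projective (rQ C) ∧
      ∃ w : rf C ≫ rπ C = 0, (ShortComplex.mk (rf C) (rπ C) w).ShortExact)
    {p p' : IsoA R × IsoA R} {P Q P' Q' : R} {K : Z2Cx R} (hK : Contr K)
    (e : dsum R (dsum R (Cp rP rQ rf hfds p).1 (Kc P Q)) K ≅
      dsum R (dsum R (Cp rP rQ rf hfds p').1 (Kc P' Q')) K) :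
    p = p' ∧ K0.cls R P = K0.cls R P' ∧ K0.cls R Q = K0.cls R Q' := by
  have key (p : IsoA R × IsoA R) (P Q : R) :
      Nonempty (H0 R (dsum R (dsum R (Cp rP rQ rf hfds p).1 (Kc P Q)) K) ≅ (Quot.out p.1).1) ∧
      Nonempty (H1 R (dsum R (dsum R (Cp rP rQ rf hfds p).1 (Kc P Q)) K) ≅ (Quot.out p.2).1) := by
    obtain ⟨a⟩ := H0_dsum (dsum R (Cp rP rQ rf hfds p).1 (Kc P Q)) K (isZero_H0 hK)
    obtain ⟨a'⟩ := H1_dsum (dsum R (Cp rP rQ rf hfds p).1 (Kc P Q)) K (isZero_H1 hK)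
    obtain ⟨b⟩ := H0_dsum (Cp rP rQ rf hfds p).1 (Kc P Q) (isZero_H0 (contr_Kc P Q))
    obtain ⟨b'⟩ := H1_dsum (Cp rP rQ rf hfds p).1 (Kc P Q) (isZero_H1 (contr_Kc P Q))
    obtain ⟨hp1, hq1, w1, h1⟩ := hres _ (Quot.out p.1).2
    obtain ⟨hp2, hq2, w2, h2⟩ := hres _ (Quot.out p.2).2
    obtain ⟨c⟩ := H0_CC _ _ h2.mono_f _ _ h1
    obtain ⟨c'⟩ := H1_CC _ _ h1.mono_f _ _ h2
    exact ⟨⟨a ≪≫ b ≪≫ c⟩, ⟨a' ≪≫ b' ≪≫ c'⟩⟩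
  obtain ⟨⟨a⟩, ⟨b⟩⟩ := key p P Q
  obtain ⟨⟨a'⟩, ⟨b'⟩⟩ := key p' P' Q'
  have hp : p = p' := Prod.ext (out_inj (a.symm ≪≫ H0iso e ≪≫ a'))
    (out_inj (b.symm ≪≫ H1iso e ≪≫ b'))
  subst hp
  have h0 := z0_iso e
  have h1 := z1_iso e
  simp only [z0_dsum _ K, z0_dsum _ (Kc _ _), z0_Kc] at h0
  simp only [z1_dsum _ K, z1_dsum _ (Kc _ _), z1_Kc] at h1
  exact ⟨rfl, add_left_cancel (add_right_cancel h0), add_left_cancel (add_right_cancel h1)⟩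

lemma bas_indep (rπ : ∀ C : R, rQ C ⟶ C)
    (hres : ∀ C : R, IsFinHom R C → Projective (rP C) ∧ Projective (rQ C) ∧
      ∃ w : rf C ≫ rπ C = 0, (ShortComplex.mk (rf C) (rπ C) w).ShortExact) : LinearIndependent ℂ (bas S rP rQ rf hfds) := by
  classical
  rw [linearIndependent_iff']
  intro s g hg
  let cc (p : IsoA R × IsoA R) : K0 R × K0 R :=
    (S.dd.cplus (Cp rP rQ rf hfds p).1, S.dd.cminus (Cp rP rQ rf hfds p).1)
  obtain ⟨δ, -, hδ⟩ := eff_finset S.dd (s.image fun i => i.2 - cc i.1)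
  have hne : Nonempty (FCx R) := ⟨⟨zeroCx R, finCx_zero⟩⟩
  have H : ∀ i ∈ s, ∃ (L : FCx R) (t : ℂ), t ≠ 0 ∧
      S.mulD (bas S rP rQ rf hfds i) (S.KK δ) = t • br S L ∧
      ∃ P Q : R, L.1 = dsum R (Cp rP rQ rf hfds i.1).1 (Kc P Q) ∧
        i.2 - cc i.1 + δ = (K0.cls R P, K0.cls R Q) := by
    intro i hi
    obtain ⟨P, Q, hP, hQ, h⟩ := hδ _ (Finset.mem_image_of_mem _ hi)
    obtain ⟨u, hu, hE⟩ := E_KK S (Cp rP rQ rf hfds i.1)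
    let L : FCx R := ⟨dsum R (Cp rP rQ rf hfds i.1).1 (Kc P Q),
      finCx_dsum (Cp rP rQ rf hfds i.1).2 (finCx_Kc hP hQ) (contr_Kc P Q)⟩
    obtain ⟨t, ht, h'⟩ := br_contr S (Cp rP rQ rf hfds i.1) L hP hQ (Iso.refl _)
    refine ⟨L, u * t, mul_ne_zero hu ht, ?_, P, Q, rfl, h⟩
    unfold bas
    rw [hE, map_smul, LinearMap.smul_apply, locKK, mul_smul, ← h', ← h]
  choose! L t ht hL hiso using H
  have h1 : S.loc (∑ i ∈ s, (g i * t i) • Finsupp.single (fcls R (L i)) 1) = 0 := by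
    have h2 := congrArg (fun x => S.mulD x (S.KK δ)) hg
    simp only [map_sum, map_smul, LinearMap.sum_apply, LinearMap.smul_apply, map_zero,
      LinearMap.zero_apply] at h2 ⊢
    rw [← h2]
    refine Finset.sum_congr rfl fun i hi => ?_
    rw [hL i hi, smul_smul]
  obtain ⟨K, fK, aK, h3⟩ := (S.loc_ker _).1 h1
  have cK : Contr K := contr_of_acyclic S.dd fK.1 fK.2.1 aK
  let N (i : (IsoA R × IsoA R) × (K0 R × K0 R)) : FCx R :=
    ⟨dsum R (L i).1 K, finCx_dsum (L i).2 fK cK⟩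
  have H2 (i) := mulH_contr S (L i) ⟨K, fK⟩ (N i) cK (Iso.refl _)
  choose r hr hr' using H2
  simp only [map_sum, map_smul, LinearMap.sum_apply, LinearMap.smul_apply, hr'] at h3
  have hinj : ∀ i ∈ s, ∀ j ∈ s, fcls R (N i) = fcls R (N j) → i = j := by
    intro i hi j hj hij
    obtain ⟨e⟩ := fcls_iso hij
    obtain ⟨P, Q, e1, h1⟩ := hiso i hi
    obtain ⟨P', Q', e2, h2⟩ := hiso j hj
    have e' : dsum R (L i).1 K ≅ dsum R (L j).1 K := e
    rw [e1, e2] at e'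
    obtain ⟨hp, hP, hQ⟩ := sep rP rQ rf hfds rπ hres cK e'
    rw [hP, hQ, ← h2, hp] at h1
    exact Prod.ext hp (by simpa using h1)
  intro j hj
  have h4 := DFunLike.congr_fun h3 (fcls R (N j))
  rw [Finsupp.finsetSum_apply, Finset.sum_eq_single j] at h4
  · simpa [ht j hj, hr j] using h4
  · intro i hi hij
    have : fcls R (N i) ≠ fcls R (N j) := fun h => hij (hinj i hi j hj h)
    simp [this]
  · exact fun h => absurd hj h

end
end S11
theorem stmt11 (hH : Hereditary k R) (hc : CondC R) (hd : CondD R) (he : CondE R)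
    (S : DHSetting k R)
    -- a fixed choice of projective resolution `0 → P_C → Q_C → C → 0` for each object
    (rP rQ : R → R) (rf : ∀ C : R, rP C ⟶ rQ C) (rπ : ∀ C : R, rQ C ⟶ C)
    (hres : ∀ C : R, IsFinHom R C → Projective (rP C) ∧ Projective (rQ C) ∧
      ∃ w : rf C ≫ rπ C = 0, (ShortComplex.mk (rf C) (rπ C) w).ShortExact)
    (hfds : ∀ A B : R, IsFinHom R A → IsFinHom R B →
      FinCx R (Z2Cx.dsum R (Z2Cx.Cf R (rf A)) (Z2Cx.dagger R (Z2Cx.Cf R (rf B))))) :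
    -- `DH(R)` is free as a right `DH₀(R) = ℂ[K(R) × K(R)]`-module with
    -- basis `{E_{A,B}}`; i.e. the evaluation map below is bijective.
    Function.Bijective (fun m : (IsoA R × IsoA R) →₀ ((K0 R × K0 R) →₀ ℂ) =>
      m.sum fun p r => r.sum fun γ c => c •
        S.mulD
          (Eelt S
            (Z2Cx.dsum R (Z2Cx.Cf R (rf (Quot.out p.1).1))
              (Z2Cx.dagger R (Z2Cx.Cf R (rf (Quot.out p.2).1))))
            (hfds (Quot.out p.1).1 (Quot.out p.2).1 (Quot.out p.1).2 (Quot.out p.2).2))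
          (S.KK γ)) := by
  have hF : (fun m : (IsoA R × IsoA R) →₀ ((K0 R × K0 R) →₀ ℂ) =>
      m.sum fun p r => r.sum fun γ c => c •
        S.mulD
          (Eelt S
            (Z2Cx.dsum R (Z2Cx.Cf R (rf (Quot.out p.1).1))
              (Z2Cx.dagger R (Z2Cx.Cf R (rf (Quot.out p.2).1))))
            (hfds (Quot.out p.1).1 (Quot.out p.2).1 (Quot.out p.1).2 (Quot.out p.2).2))
          (S.KK γ)) =
      (Finsupp.linearCombination ℂ (S11.bas S rP rQ rf hfds)) ∘
        (Finsupp.curryLinearEquiv ℂ).symm := by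
    funext m
    obtain ⟨n, rfl⟩ := (Finsupp.curryLinearEquiv ℂ).surjective m
    rw [Function.comp_apply, LinearEquiv.symm_apply_apply, Finsupp.linearCombination_apply]
    exact Finsupp.sum_curry_index n (fun p γ c => c • S11.bas S rP rQ rf hfds (p, γ))
  rw [hF]
  refine Function.Bijective.comp ⟨?_, ?_⟩ (LinearEquiv.bijective _)
  · exact S11.bas_indep S rP rQ rf hfds rπ hres
  · intro d
    have := S11.bas_span S rP rQ rf hfds rπ hres d
    rwa [← Finsupp.range_linearCombination] at this

end
end
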